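/- arXiv:1304.1221 — 2 statements merged into one kernel-verified Lean document; each statement's English description precedes it below -/
import Mathlib

section
/- Let G be a starlike tree on n vertices whose central vertex u is adjacent to one end of each of h ≥ 3 paths P_{a_1}, …, P_{a_h}, where a_i is even for 1 ≤ i ≤ h-1, a_1 = a_2 = k ≥ 2, and a_h < n/2 is odd. Let G' be obtained from G by adding an edge between the first vertices (the ends farthest from u) of the two branches of length k, so that G' is unicyclic containing the cycle C_{2k+1}. Then LE(G) = LE(G'), where LE denotes the Laplacian energy. -/
open scoped Classical

/-- Base relation for a starlike tree: the central vertex `Sum.inl ()` is adjacent to the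
end (index `0`) of each of the `r` branches, and branch `i` is a path on `a i` vertices. -/
def starRel (r : ℕ) (a : Fin r → ℕ) :
    (Unit ⊕ (Σ i : Fin r, Fin (a i))) → (Unit ⊕ (Σ i : Fin r, Fin (a i))) → Prop
  | Sum.inl _, Sum.inr ⟨_, j⟩ => (j : ℕ) = 0
  | Sum.inr ⟨i, j⟩, Sum.inr ⟨i', j'⟩ => (i : ℕ) = (i' : ℕ) ∧ (j : ℕ) + 1 = (j' : ℕ)
  | _, _ => False

/-- The starlike tree whose central vertex is adjacent to one end of each of the `r`
paths `P_{a 0}, …, P_{a (r-1)}`. -/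
def starGraph (r : ℕ) (a : Fin r → ℕ) : SimpleGraph (Unit ⊕ (Σ i : Fin r, Fin (a i))) :=
  SimpleGraph.fromRel (starRel r a)

/-- The Laplacian energy of a graph: `LE(G) = Σ_i |μ_i - d̄|`, `d̄ = 2e(G)/|V|`. -/
noncomputable def LEnergy {V : Type*} [Fintype V] [DecidableEq V] (G : SimpleGraph V) : ℝ :=
  (((G.lapMatrix ℝ).charpoly.roots).map
    (fun μ => |μ - 2 * (G.edgeFinset.card : ℝ) / (Fintype.card V : ℝ)|)).sum

open Matrix in
/-- Spectral theorem for a real symmetric matrix, stated with the transpose. -/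
lemma Matrix.IsHermitian.exists_orthogonal_diagonalization {V : Type*} [Fintype V] [DecidableEq V]
    {A : Matrix V V ℝ} (hA : A.IsHermitian) :
    ∃ U : Matrix V V ℝ, Uᵀ * U = 1 ∧ A = U * diagonal hA.eigenvalues * Uᵀ := by
  refine ⟨hA.eigenvectorUnitary, ?_, ?_⟩
  · simpa [star_eq_conjTranspose] using Unitary.coe_star_mul_self hA.eigenvectorUnitary
  · conv_lhs => rw [hA.spectral_theorem, Unitary.conjStarAlgAut_apply]
    simp [star_eq_conjTranspose]

open Matrix in
/-- If `s • A ≤ s * c` as a quadratic form on the kernel of a linear map into a space of dimension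
`card X`, then at most `card X` eigenvalues `μ` of `A` satisfy `s * c < s * μ`. -/
lemma Matrix.IsHermitian.card_eigenvalues_le {V X : Type*} [Fintype V] [DecidableEq V] [Fintype X]
    {A : Matrix V V ℝ} (hA : A.IsHermitian) (s c : ℝ) (φ : (V → ℝ) →ₗ[ℝ] (X → ℝ))
    (hφ : ∀ x, φ x = 0 → s * (x ⬝ᵥ A *ᵥ x) ≤ s * (c * (x ⬝ᵥ x))) :
    (Finset.univ.filter fun i => s * c < s * hA.eigenvalues i).card ≤ Fintype.card X := by
  obtain ⟨U, hU, hAU⟩ := hA.exists_orthogonal_diagonalization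
  set μ := hA.eigenvalues with hμ
  rw [← Fintype.card_subtype]
  let ext : ({i // s * c < s * μ i} → ℝ) →ₗ[ℝ] (V → ℝ) :=
    Function.ExtendByZero.linearMap ℝ Subtype.val
  have hext : ∀ y i, ext y i.1 = y i := fun y i => by
    simp [ext]
  have hext0 : ∀ y i, ¬ s * c < s * μ i → ext y i = 0 := fun y i hi => by
    simp only [ext, Function.ExtendByZero.linearMap_apply]
    rw [Function.extend_apply' _ _ _ (by rintro ⟨a, rfl⟩; exact hi a.2)]
    rfl
  have hinj : Function.Injective (φ ∘ₗ Matrix.mulVecLin U ∘ₗ ext) := by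
    rw [← LinearMap.ker_eq_bot, LinearMap.ker_eq_bot']
    intro y hy
    have key := hφ (U *ᵥ ext y) hy
    have e1 : (U *ᵥ ext y) ⬝ᵥ (U *ᵥ ext y) = ∑ i, ext y i ^ 2 := by
      rw [dotProduct_mulVec, vecMul_mulVec, hU, vecMul_one]
      simp [dotProduct, sq]
    have e2 : (U *ᵥ ext y) ⬝ᵥ A *ᵥ (U *ᵥ ext y) = ∑ i, μ i * ext y i ^ 2 := by
      have : A *ᵥ (U *ᵥ ext y) = U *ᵥ (diagonal μ *ᵥ ext y) := by
        rw [hAU, mulVec_mulVec, mulVec_mulVec, Matrix.mul_assoc, hU, Matrix.mul_one]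
      rw [this, dotProduct_mulVec, vecMul_mulVec, hU, vecMul_one]
      simp only [dotProduct, mulVec_diagonal]
      exact Finset.sum_congr rfl fun i _ => by ring
    rw [e1, e2, Finset.mul_sum, Finset.mul_sum, Finset.mul_sum] at key
    have hnn : ∀ i ∈ Finset.univ, s * (c * ext y i ^ 2) ≤ s * (μ i * ext y i ^ 2) := by
      intro i _
      by_cases hi : s * c < s * μ i
      · rw [← mul_assoc, ← mul_assoc]; gcongr
      · simp [hext0 y i hi]
    have heq := (Finset.sum_eq_sum_iff_of_le hnn).1 (le_antisymm (Finset.sum_le_sum hnn) key)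
    funext i
    have h1 := heq i.1 (Finset.mem_univ _)
    have h2 : (s * μ i.1 - s * c) * ext y i.1 ^ 2 = 0 := by linear_combination -h1
    rw [hext] at h2
    rcases mul_eq_zero.1 h2 with h3 | h3
    · have := i.2; linarith
    · simpa using h3
  simpa using LinearMap.finrank_le_finrank_of_injective hinj

open Matrix Polynomial in
/-- The charpoly of `(A - c)²` in terms of the eigenvalues of `A`. -/
lemma Matrix.IsHermitian.roots_charpoly_sub_sq {V : Type*} [Fintype V] [DecidableEq V]
    {A : Matrix V V ℝ} (hA : A.IsHermitian) (c : ℝ) :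
    ((A - c • (1 : Matrix V V ℝ)) * (A - c • (1 : Matrix V V ℝ))ᵀ).charpoly.roots =
      Finset.univ.val.map fun i => (hA.eigenvalues i - c) ^ 2 := by
  obtain ⟨U, hU, hAU⟩ := hA.exists_orthogonal_diagonalization
  set μ := hA.eigenvalues
  have hU' : U * Uᵀ = 1 := mul_eq_one_comm.1 hU
  have hAc : A - c • (1 : Matrix V V ℝ) = U * diagonal (fun i => μ i - c) * Uᵀ := by
    have : diagonal (fun i => μ i - c) = diagonal μ - c • (1 : Matrix V V ℝ) := by
      rw [smul_one_eq_diagonal, diagonal_sub]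
    rw [this, Matrix.mul_sub, Matrix.sub_mul, ← hAU]
    simp [hU']
  have hsq : (A - c • (1 : Matrix V V ℝ)) * (A - c • (1 : Matrix V V ℝ))ᵀ =
      U * (diagonal (fun i => (μ i - c) ^ 2) * Uᵀ) := by
    rw [hAc, transpose_mul, transpose_mul, transpose_transpose, diagonal_transpose]
    calc _ = U * (diagonal (fun i => μ i - c) *
            ((Uᵀ * U) * (diagonal (fun i => μ i - c) * Uᵀ))) := by
          simp only [Matrix.mul_assoc]
      _ = _ := by
          rw [hU, Matrix.one_mul, ← Matrix.mul_assoc (diagonal _), diagonal_mul_diagonal]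
          simp only [sq]
  rw [hsq, charpoly_mul_comm, Matrix.mul_assoc, hU, Matrix.mul_one, charpoly_diagonal]
  have := roots_multiset_prod_X_sub_C (Finset.univ.val.map fun i => (μ i - c) ^ 2)
  rwa [Multiset.map_map] at this

open Matrix in
/-- Permuting rows and columns of `A - c` independently does not change `∑ |μ - c|`. -/
lemma Matrix.IsHermitian.sum_abs_eigenvalues_sub_eq {V : Type*} [Fintype V] [DecidableEq V]
    {A B : Matrix V V ℝ} (hA : A.IsHermitian) (hB : B.IsHermitian) (c : ℝ) (e f : V ≃ V)
    (h : B - c • (1 : Matrix V V ℝ) = (A - c • (1 : Matrix V V ℝ)).submatrix e f) :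
    ∑ i, |hB.eigenvalues i - c| = ∑ i, |hA.eigenvalues i - c| := by
  have hsq : (B - c • (1 : Matrix V V ℝ)) * (B - c • (1 : Matrix V V ℝ))ᵀ =
      Matrix.reindex e.symm e.symm
        ((A - c • (1 : Matrix V V ℝ)) * (A - c • (1 : Matrix V V ℝ))ᵀ) := by
    rw [h, transpose_submatrix, submatrix_mul_equiv]
    rfl
  have hr := hB.roots_charpoly_sub_sq c
  rw [hsq, charpoly_reindex, hA.roots_charpoly_sub_sq c] at hr
  have := congrArg (fun m : Multiset ℝ => (m.map Real.sqrt).sum) hr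
  simp only [Multiset.map_map, Function.comp_def, Real.sqrt_sq_eq_abs] at this
  exact this.symm

/-- The function `t ↦ ∑ |μ i - t|` takes the same value at the two ends of an interval
of medians. -/
lemma sum_abs_sub_eq_of_card_le {V : Type*} [Fintype V] (μ : V → ℝ) {t₁ t₂ : ℝ} (ht : t₁ < t₂)
    (m : ℕ) (hV : Fintype.card V = 2 * m)
    (h₁ : (Finset.univ.filter fun i => t₁ < μ i).card ≤ m)
    (h₂ : (Finset.univ.filter fun i => μ i < t₂).card ≤ m) :
    ∑ i, |μ i - t₁| = ∑ i, |μ i - t₂| := by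
  set P := Finset.univ.filter fun i => t₁ < μ i with hP
  set Q := Finset.univ.filter fun i => μ i < t₂ with hQ
  have hPQ : P ∪ Q = Finset.univ := by
    ext i
    simp only [hP, hQ, Finset.mem_union, Finset.mem_filter, Finset.mem_univ, true_and, iff_true]
    rcases lt_or_ge t₁ (μ i) with h | h
    · exact Or.inl h
    · exact Or.inr (h.trans_lt ht)
  have hc := Finset.card_union_add_card_inter P Q
  rw [hPQ, Finset.card_univ, hV] at hc
  have hdisj : P ∩ Q = ∅ := Finset.card_eq_zero.1 (by omega)
  have hterm : ∀ i, |μ i - t₁| - |μ i - t₂| =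
      (t₂ - t₁) * ((if t₁ < μ i then 1 else 0) - (if μ i < t₂ then 1 else 0)) := by
    intro i
    have hi : i ∉ P ∩ Q := by simp [hdisj]
    simp only [hP, hQ, Finset.mem_inter, Finset.mem_filter, Finset.mem_univ, true_and,
      not_and, not_lt] at hi
    by_cases h : t₁ < μ i
    · have := hi h
      rw [abs_of_pos (by linarith), abs_of_nonneg (by linarith), if_pos h, if_neg (not_lt.2 this)]
      ring
    · rw [abs_of_nonpos (by linarith), abs_of_neg (by linarith), if_neg h, if_pos (by linarith)]
      ring
  have hcard : P.card = Q.card := by omega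
  rw [← sub_eq_zero, ← Finset.sum_sub_distrib, Finset.sum_congr rfl fun i _ => hterm i,
    ← Finset.mul_sum, Finset.sum_sub_distrib, Finset.sum_boole, Finset.sum_boole, hcard, sub_self,
    mul_zero]

/-- Growth bound for a sequence satisfying `w (i + 1) + w i = ε * e i`. -/
lemma sq_le_of_alternating_recurrence {ε : ℝ} (hε : 0 < ε) (w e : ℕ → ℝ) {P Q : ℝ} (hP : 0 ≤ P)
    (hQ : 0 ≤ Q) (h0 : w 0 ^ 2 ≤ P * Q) (N : ℕ) (hw : ∀ i < N, ε * e i = w i + w (i + 1)) :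
    ∀ i ≤ N, w i ^ 2 ≤ (P + ε * i) * (Q + ε * ∑ l ∈ Finset.range i, e l ^ 2) := by
  intro i
  induction i with
  | zero => intro _; simpa using h0
  | succ i ih =>
    intro hi
    have hb := ih (by omega)
    have hrec := hw i (by omega)
    rw [Finset.sum_range_succ]
    set S := ∑ l ∈ Finset.range i, e l ^ 2
    have hS : 0 ≤ S := Finset.sum_nonneg fun _ _ => sq_nonneg _
    push_cast
    have hP' : 0 ≤ P + ε * i := by positivity
    have hQ' : 0 ≤ Q + ε * S := by positivity
    have hw' : w (i + 1) = ε * e i - w i := by linarith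
    rw [hw', show P + ε * (i + 1) = P + ε * i + ε by ring]
    generalize P + ε * i = p at *
    have hq : 0 ≤ p * e i ^ 2 + 2 * e i * w i + (Q + ε * S) := by
      rcases hP'.eq_or_lt with rfl | hp
      · have : w i = 0 := by nlinarith
        rw [this]; nlinarith
      · refine nonneg_of_mul_nonneg_right (a := p) ?_ hp
        nlinarith [sq_nonneg (p * e i + w i)]
    nlinarith [mul_nonneg hε.le hq]

/-- The form `∑ ε X² - 2 ∑ X X' - X_m²` of an even branch is nonpositive on the sequences
for which the odd positions are optimal. -/
lemma even_branch_nonpos {ε : ℝ} (hε : 0 < ε) (N : ℕ) (hN : ε * N ≤ 1) (X : ℕ → ℝ) (h0 : X 0 = 0)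
    (hX : ∀ i < N, ε * X (2 * i + 1) = X (2 * i) + X (2 * i + 2)) :
    ∑ t ∈ Finset.range (2 * N), ε * X (t + 1) ^ 2 - X (2 * N) ^ 2
      - 2 * ∑ t ∈ Finset.range (2 * N), X t * X (t + 1) ≤ 0 := by
  have hid : ∑ t ∈ Finset.range (2 * N), ε * X (t + 1) ^ 2
      - 2 * ∑ t ∈ Finset.range (2 * N), X t * X (t + 1) =
      ε * ∑ i ∈ Finset.range N, X (2 * i + 2) ^ 2
        - ε * ∑ i ∈ Finset.range N, X (2 * i + 1) ^ 2 := by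
    clear hN
    induction N with
    | zero => simp
    | succ N ih =>
      have h1 := ih fun i hi => hX i (by omega)
      have h2 := hX N (by omega)
      rw [Nat.mul_succ]
      simp only [Finset.sum_range_succ]
      linear_combination h1 + 2 * X (2 * N + 1) * h2
  have hb := sq_le_of_alternating_recurrence hε (fun i => X (2 * i)) (fun i => X (2 * i + 1))
    le_rfl le_rfl (by simp [h0]) N hX
  set T := ∑ i ∈ Finset.range N, X (2 * i + 1) ^ 2 with hT
  have hT0 : 0 ≤ T := Finset.sum_nonneg fun _ _ => sq_nonneg _
  have hsum : ∑ i ∈ Finset.range N, X (2 * i + 2) ^ 2 ≤ N * ((ε * N) * (ε * T)) := by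
    rw [← nsmul_eq_mul]
    refine (Finset.sum_le_card_nsmul _ _ _ fun i hi => ?_).trans_eq (by rw [Finset.card_range])
    have hi' := Finset.mem_range.1 hi
    refine (hb (i + 1) hi').trans ?_
    simp only [zero_add]
    have : ((i + 1 : ℕ) : ℝ) ≤ N := by exact_mod_cast hi'
    have hsub : ∑ l ∈ Finset.range (i + 1), X (2 * l + 1) ^ 2 ≤ T :=
      Finset.sum_le_sum_of_subset_of_nonneg (Finset.range_mono hi') fun _ _ _ => sq_nonneg _
    gcongr
  have hfin : N * ((ε * N) * (ε * T)) ≤ T := by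
    have : (ε * N) * (ε * N) ≤ 1 := mul_le_one₀ hN (by positivity) hN
    nlinarith
  nlinarith [sq_nonneg (X (2 * N))]

/-- The odd analogue of `even_branch_nonpos`. -/
lemma odd_branch_nonpos {ε : ℝ} (hε : 0 < ε) (M : ℕ) (hM : ε * (M + 1) ≤ 1 / 2) (X : ℕ → ℝ)
    (h0 : X 0 = 0) (hX : ∀ i < M, ε * X (2 * i + 2) = X (2 * i + 1) + X (2 * i + 3)) :
    ∑ t ∈ Finset.range (2 * M + 1), ε * X (t + 1) ^ 2 - X (2 * M + 1) ^ 2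
      - 2 * ∑ t ∈ Finset.range (2 * M + 1), X t * X (t + 1) ≤ 0 := by
  have hid : ∑ t ∈ Finset.range (2 * M + 1), ε * X (t + 1) ^ 2
      - 2 * ∑ t ∈ Finset.range (2 * M + 1), X t * X (t + 1) =
      ε * ∑ i ∈ Finset.range (M + 1), X (2 * i + 1) ^ 2
        - ε * ∑ i ∈ Finset.range M, X (2 * i + 2) ^ 2 := by
    clear hM
    induction M with
    | zero => simp [h0]
    | succ M ih =>
      have h1 := ih fun i hi => hX i (by omega)
      have h2 := hX M (by omega)
      rw [Finset.sum_range_succ _ (M + 1), Finset.sum_range_succ (fun i => X (2 * i + 2) ^ 2) M]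
      rw [show 2 * (M + 1) + 1 = 2 * M + 1 + 1 + 1 by ring]
      rw [Finset.sum_range_succ _ (2 * M + 1 + 1), Finset.sum_range_succ _ (2 * M + 1 + 1),
        Finset.sum_range_succ _ (2 * M + 1), Finset.sum_range_succ _ (2 * M + 1)]
      linear_combination h1 + 2 * X (2 * M + 2) * h2
  have hb := sq_le_of_alternating_recurrence hε (fun i => X (2 * (M - i) + 1))
    (fun i => X (2 * (M - 1 - i) + 2)) zero_le_one (sq_nonneg (X (2 * M + 1))) (by simp) M
    (fun i hi => by
      have := hX (M - 1 - i) (by omega)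
      rw [this, show 2 * (M - 1 - i) + 1 = 2 * (M - (i + 1)) + 1 by omega,
        show 2 * (M - 1 - i) + 3 = 2 * (M - i) + 1 by omega, add_comm])
  set T := ∑ i ∈ Finset.range M, X (2 * i + 2) ^ 2 with hT
  have hT0 : 0 ≤ T := Finset.sum_nonneg fun _ _ => sq_nonneg _
  have hTr : ∑ l ∈ Finset.range M, X (2 * (M - 1 - l) + 2) ^ 2 = T :=
    Finset.sum_range_reflect (fun i => X (2 * i + 2) ^ 2) M
  have hsum : ∑ i ∈ Finset.range (M + 1), X (2 * i + 1) ^ 2 ≤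
      ((M + 1 : ℕ) : ℝ) * ((1 + ε * M) * (X (2 * M + 1) ^ 2 + ε * T)) := by
    rw [← nsmul_eq_mul]
    refine (Finset.sum_le_card_nsmul _ _ _ fun i hi => ?_).trans_eq (by rw [Finset.card_range])
    have hi' : i ≤ M := by have := Finset.mem_range.1 hi; omega
    have h1 := hb (M - i) (by omega)
    simp only [show M - (M - i) = i by omega] at h1
    refine h1.trans ?_
    have : ((M - i : ℕ) : ℝ) ≤ M := by exact_mod_cast Nat.sub_le M i
    have hsub : ∑ l ∈ Finset.range (M - i), X (2 * (M - 1 - l) + 2) ^ 2 ≤ T := by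
      rw [← hTr]
      exact Finset.sum_le_sum_of_subset_of_nonneg (Finset.range_mono (Nat.sub_le M i))
        fun _ _ _ => sq_nonneg _
    gcongr
  have hfin : ε * (((M + 1 : ℕ) : ℝ) * ((1 + ε * M) * (X (2 * M + 1) ^ 2 + ε * T))) ≤
      X (2 * M + 1) ^ 2 + ε * T := by
    set R := X (2 * M + 1) ^ 2 + ε * T
    have hR : 0 ≤ R := by positivity
    have h1 : 1 + ε * M ≤ 3 / 2 := by nlinarith
    calc _ = (ε * (M + 1)) * (1 + ε * M) * R := by push_cast; ring
      _ ≤ 1 / 2 * (3 / 2) * R := by gcongr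
      _ ≤ R := by linarith
  nlinarith [mul_le_mul_of_nonneg_left hsum hε.le]

/-- On sequences alternating along the even positions, the form of an even branch
depends only on `X 0`. -/
lemma even_branch_eq (N : ℕ) (X : ℕ → ℝ) (hX : ∀ i < N, X (2 * i) + X (2 * i + 2) = 0) :
    X (2 * N) ^ 2 + 2 * ∑ t ∈ Finset.range (2 * N), X t * X (t + 1) = X 0 ^ 2 := by
  induction N with
  | zero => simp
  | succ N ih =>
    have h1 := ih fun i hi => hX i (by omega)
    have h2 := hX N (by omega)
    rw [Nat.mul_succ]
    simp only [Finset.sum_range_succ]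
    linear_combination h1 + (X (2 * N + 2) - X (2 * N) + 2 * X (2 * N + 1)) * h2

/-- The odd analogue of `even_branch_eq`. -/
lemma odd_branch_eq (M : ℕ) (X : ℕ → ℝ) (h0 : X 0 + X 1 = 0)
    (hX : ∀ i < M, X (2 * i + 1) + X (2 * i + 3) = 0) :
    X (2 * M + 1) ^ 2 + 2 * ∑ t ∈ Finset.range (2 * M + 1), X t * X (t + 1) = - X 0 ^ 2 := by
  induction M with
  | zero => simp; linear_combination (X 0 + X 1) * h0
  | succ M ih =>
    have h1 := ih fun i hi => hX i (by omega)
    have h2 := hX M (by omega)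
    rw [show 2 * (M + 1) + 1 = 2 * M + 1 + 1 + 1 by ring]
    rw [Finset.sum_range_succ _ (2 * M + 1 + 1), Finset.sum_range_succ _ (2 * M + 1)]
    linear_combination h1 + (X (2 * M + 3) - X (2 * M + 1) + 2 * X (2 * M + 2)) * h2

section Starlike

variable {h : ℕ} {a : Fin h → ℕ}

/-- The neighbour of a branch vertex that is closer to the centre. -/
def starParent (i : Fin h) (j : Fin (a i)) : Unit ⊕ (Σ i : Fin h, Fin (a i)) :=
  if (j : ℕ) = 0 then Sum.inl () else Sum.inr ⟨i, ⟨j - 1, by omega⟩⟩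

/-- The values of `x` along branch `i`, starting at the centre and extended by zero. -/
def branchSeq (x : Unit ⊕ (Σ i : Fin h, Fin (a i)) → ℝ) (i : Fin h) : ℕ → ℝ
  | 0 => x (Sum.inl ())
  | t + 1 => if ht : t < a i then x (Sum.inr ⟨i, ⟨t, ht⟩⟩) else 0

lemma branchSeq_succ (x : Unit ⊕ (Σ i : Fin h, Fin (a i)) → ℝ) (i : Fin h) (j : Fin (a i)) :
    branchSeq x i (j + 1) = x (Sum.inr ⟨i, j⟩) := by
  simp [branchSeq]

lemma branchSeq_eq_starParent (x : Unit ⊕ (Σ i : Fin h, Fin (a i)) → ℝ) (i : Fin h)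
    (j : Fin (a i)) : branchSeq x i j = x (starParent i j) := by
  obtain ⟨j, hj⟩ := j
  cases j with
  | zero => simp [branchSeq, starParent]
  | succ t => simp [branchSeq, starParent, show t < a i by omega]

lemma sigma_fin_ext_iff {i i' : Fin h} {j : Fin (a i)} {j' : Fin (a i')} :
    (⟨i, j⟩ : Σ i : Fin h, Fin (a i)) = ⟨i', j'⟩ ↔ i = i' ∧ (j : ℕ) = j' := by
  constructor
  · intro e
    cases e
    exact ⟨rfl, rfl⟩
  · rintro ⟨rfl, e⟩
    rw [Fin.ext e]

lemma starRel_inr_iff (v : Unit ⊕ (Σ i : Fin h, Fin (a i))) (i : Fin h) (j : Fin (a i)) :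
    starRel h a v (Sum.inr ⟨i, j⟩) ↔ v = starParent i j := by
  rcases v with _ | ⟨i', j'⟩
  · simp only [starRel, starParent]
    split_ifs with h0 <;> simp [h0]
  · simp only [starRel, starParent]
    split_ifs with h0
    · simp; omega
    · rw [Sum.inr.injEq, sigma_fin_ext_iff, Fin.ext_iff]
      simp; omega

lemma not_starRel_inl (v : Unit ⊕ (Σ i : Fin h, Fin (a i))) (c : Unit) :
    ¬ starRel h a v (Sum.inl c) := by
  rcases v with _ | ⟨i', j'⟩ <;> simp [starRel]

lemma starRel_asymm {v w : Unit ⊕ (Σ i : Fin h, Fin (a i))} (hvw : starRel h a v w) :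
    ¬ starRel h a w v := by
  rcases v with _ | ⟨i, j⟩ <;> rcases w with _ | ⟨i', j'⟩ <;> simp_all [starRel]
  omega

lemma starGraph_adj_iff (v w : Unit ⊕ (Σ i : Fin h, Fin (a i))) :
    (starGraph h a).Adj v w ↔ starRel h a v w ∨ starRel h a w v := by
  rw [starGraph, SimpleGraph.fromRel_adj, and_iff_right_iff_imp]
  rintro (hr | hr) rfl <;> exact starRel_asymm hr hr

lemma ite_starGraph_adj (v w : Unit ⊕ (Σ i : Fin h, Fin (a i))) (c : ℝ) :
    (if (starGraph h a).Adj v w then c else 0) =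
      (if starRel h a v w then c else 0) + if starRel h a w v then c else 0 := by
  rw [starGraph_adj_iff]
  by_cases h1 : starRel h a v w
  · simp [h1, starRel_asymm h1]
  · simp [h1]

lemma sum_starRel_right (g : Unit ⊕ (Σ i : Fin h, Fin (a i)) → ℝ) (i : Fin h) (j : Fin (a i)) :
    ∑ v, (if starRel h a v (Sum.inr ⟨i, j⟩) then g v else 0) = g (starParent i j) := by
  simp [starRel_inr_iff]

/-- Sums over adjacent pairs of a starlike tree, each edge being listed by its outer end. -/
lemma sum_starGraph_adj (g : Unit ⊕ (Σ i : Fin h, Fin (a i)) → Unit ⊕ (Σ i : Fin h, Fin (a i)) → ℝ)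
    (hg : ∀ v w, g v w = g w v) :
    ∑ v, ∑ w, (if (starGraph h a).Adj v w then g v w else 0) =
      2 * ∑ i, ∑ j, g (starParent i j) (Sum.inr ⟨i, j⟩) := by
  have hR : ∑ w, ∑ v, (if starRel h a v w then g v w else 0) =
      ∑ i, ∑ j, g (starParent i j) (Sum.inr ⟨i, j⟩) := by
    rw [Fintype.sum_sum_type, Fintype.sum_sigma]
    simp only [not_starRel_inl, if_false, Finset.sum_const_zero, zero_add]
    exact Finset.sum_congr rfl fun i _ => Finset.sum_congr rfl fun j _ =>
      sum_starRel_right (fun v => g v (Sum.inr ⟨i, j⟩)) i j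
  have hR' : ∑ v, ∑ w, (if starRel h a w v then g v w else 0) =
      ∑ i, ∑ j, g (starParent i j) (Sum.inr ⟨i, j⟩) := by
    rw [← hR]
    exact Finset.sum_congr rfl fun v _ => Finset.sum_congr rfl fun w _ => by rw [hg]
  simp only [ite_starGraph_adj, Finset.sum_add_distrib]
  rw [hR', Finset.sum_comm, hR, two_mul]

lemma card_starGraph_edgeFinset : (starGraph h a).edgeFinset.card = ∑ i, a i := by
  have h1 := sum_starGraph_adj (a := a) (fun _ _ => (1 : ℝ)) fun _ _ => rfl
  have h2 := (starGraph h a).sum_degrees_eq_twice_card_edges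
  have h3 : ((∑ v, (starGraph h a).degree v : ℕ) : ℝ) = 2 * ∑ i, (a i : ℝ) := by
    push_cast
    simp only [SimpleGraph.degree_eq_sum_if_adj]
    rw [h1]
    simp
  rw [h2] at h3
  have : ((starGraph h a).edgeFinset.card : ℝ) = ((∑ i, a i : ℕ) : ℝ) := by
    push_cast at h3 ⊢
    linarith
  exact_mod_cast this

lemma sum_branchSeq_sq (x : Unit ⊕ (Σ i : Fin h, Fin (a i)) → ℝ) :
    x ⬝ᵥ x = x (Sum.inl ()) ^ 2 +
      ∑ i, ∑ t ∈ Finset.range (a i), branchSeq x i (t + 1) ^ 2 := by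
  simp only [dotProduct, Fintype.sum_sum_type, Fintype.sum_sigma, Finset.sum_range, branchSeq_succ,
    Finset.univ_unique, Finset.sum_singleton, sq]

open Matrix in
lemma starGraph_lapMatrix_quadratic (x : Unit ⊕ (Σ i : Fin h, Fin (a i)) → ℝ) :
    x ⬝ᵥ (starGraph h a).lapMatrix ℝ *ᵥ x = 2 * (x ⬝ᵥ x) + (h - 2) * x (Sum.inl ()) ^ 2 -
      ∑ i, (branchSeq x i (a i) ^ 2 +
        2 * ∑ t ∈ Finset.range (a i), branchSeq x i t * branchSeq x i (t + 1)) := by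
  have h1 : x ⬝ᵥ (starGraph h a).lapMatrix ℝ *ᵥ x =
      ∑ i, ∑ t ∈ Finset.range (a i), (branchSeq x i t - branchSeq x i (t + 1)) ^ 2 := by
    rw [← toLinearMap₂'_apply', SimpleGraph.lapMatrix_toLinearMap₂',
      sum_starGraph_adj (fun v w => (x v - x w) ^ 2) fun _ _ => by ring,
      mul_div_cancel_left₀ _ two_ne_zero]
    simp only [Finset.sum_range, branchSeq_succ, branchSeq_eq_starParent]
  have h2 : ∀ (X : ℕ → ℝ) (m : ℕ), ∑ t ∈ Finset.range m, (X t - X (t + 1)) ^ 2 =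
      X 0 ^ 2 + 2 * ∑ t ∈ Finset.range m, X (t + 1) ^ 2 -
        (X m ^ 2 + 2 * ∑ t ∈ Finset.range m, X t * X (t + 1)) := by
    intro X m
    induction m with
    | zero => simp
    | succ m ih => simp only [Finset.sum_range_succ]; linear_combination ih
  rw [h1, sum_branchSeq_sq]
  simp only [h2, Finset.sum_sub_distrib, Finset.sum_add_distrib, ← Finset.mul_sum]
  simp only [branchSeq, Finset.sum_const, Finset.card_univ, Fintype.card_fin, nsmul_eq_mul]
  ring

/-- `branchSeq` at a fixed position as a linear functional. -/
def branchFunctional (i : Fin h) (t : ℕ) : (Unit ⊕ (Σ i : Fin h, Fin (a i)) → ℝ) →ₗ[ℝ] ℝ where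
  toFun x := branchSeq x i t
  map_add' x y := by
    cases t with
    | zero => simp [branchSeq]
    | succ t => by_cases ht : t < a i <;> simp [branchSeq, ht]
  map_smul' c x := by
    cases t with
    | zero => simp [branchSeq]
    | succ t => by_cases ht : t < a i <;> simp [branchSeq, ht]

lemma sum_range_odd_add (m : ℕ) :
    ∑ j ∈ Finset.range m, (if Odd (j + m) then 1 else 0) = (m + 1) / 2 := by
  induction m with
  | zero => simp
  | succ m ih =>
    have h1 : ∑ j ∈ Finset.range m, (if Odd (j + m) then 1 else 0) +
        ∑ j ∈ Finset.range m, (if Odd (j + (m + 1)) then 1 else 0) = m := by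
      rw [← Finset.sum_add_distrib]
      refine (Finset.sum_congr rfl fun j _ => ?_).trans (by simp : ∑ j ∈ Finset.range m, 1 = m)
      simp only [← add_assoc, Nat.odd_add_one]
      by_cases hj : Odd (j + m) <;> simp [hj]
    rw [Finset.sum_range_succ, if_pos (by rw [Nat.odd_iff]; omega)]
    omega

/-- The vertices at even distance from the end of their branch make up half of the tree. -/
lemma two_mul_card_odd_positions (iₕ : Fin h) (hodd : Odd (a iₕ))
    (heven : ∀ i, i ≠ iₕ → Even (a i)) :
    2 * Fintype.card {p : Σ i : Fin h, Fin (a i) // Odd ((p.2 : ℕ) + a p.1)} = 1 + ∑ i, a i := by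
  have h1 : Fintype.card {p : Σ i : Fin h, Fin (a i) // Odd ((p.2 : ℕ) + a p.1)} =
      ∑ i, (a i + 1) / 2 := by
    rw [Fintype.card_subtype, Finset.card_filter, Fintype.sum_sigma]
    refine Finset.sum_congr rfl fun i _ => ?_
    rw [← sum_range_odd_add, Finset.sum_range]
  rw [h1, Finset.mul_sum]
  have h2 : ∀ i, 2 * ((a i + 1) / 2) = a i + if i = iₕ then 1 else 0 := by
    intro i
    by_cases hi : i = iₕ
    · subst hi
      obtain ⟨c, hc⟩ := hodd
      simp
      omega
    · obtain ⟨c, hc⟩ := heven i hi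
      simp [hi]
      omega
  simp only [h2, Finset.sum_add_distrib, Finset.sum_ite_eq', Finset.mem_univ, if_true]
  omega

lemma card_eigenvalues_starGraph_lt_two (iₕ : Fin h) (hodd : Odd (a iₕ))
    (heven : ∀ i, i ≠ iₕ → Even (a i)) (hL : ((starGraph h a).lapMatrix ℝ).IsHermitian) :
    (Finset.univ.filter fun v => hL.eigenvalues v < 2).card ≤
      Fintype.card {p : Σ i : Fin h, Fin (a i) // Odd ((p.2 : ℕ) + a p.1)} := by
  have key := hL.card_eigenvalues_le (-1) 2
    (LinearMap.pi fun p : {p : Σ i : Fin h, Fin (a i) // Odd ((p.2 : ℕ) + a p.1)} =>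
      branchFunctional p.1.1 (p.1.2 - 1) + branchFunctional p.1.1 (p.1.2 + 1)) ?_
  · simpa using key
  intro x hx
  have hx' : ∀ (i : Fin h) (t : ℕ), t < a i → Odd (t + a i) →
      branchSeq x i (t - 1) + branchSeq x i (t + 1) = 0 := fun i t ht ho =>
    congrFun hx ⟨⟨i, ⟨t, ht⟩⟩, ho⟩
  have hbr : ∀ i, branchSeq x i (a i) ^ 2 +
      2 * ∑ t ∈ Finset.range (a i), branchSeq x i t * branchSeq x i (t + 1) =
      (if i = iₕ then -2 else 0) * x (Sum.inl ()) ^ 2 + x (Sum.inl ()) ^ 2 := by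
    intro i
    by_cases hi : i = iₕ
    · obtain ⟨M, hM⟩ := hodd
      rw [← hi] at hM
      rw [if_pos hi, hM, odd_branch_eq M _ (hx' i 0 (by omega) ⟨M, by omega⟩) fun l hl =>
        hx' i (2 * l + 2) (by omega) ⟨l + M + 1, by omega⟩]
      simp only [branchSeq]
      ring
    · obtain ⟨N, hN⟩ := heven i hi
      rw [← two_mul] at hN
      rw [if_neg hi, hN, even_branch_eq N _ fun l hl =>
        hx' i (2 * l + 1) (by omega) ⟨l + N, by omega⟩]
      simp only [branchSeq]
      ring
  rw [starGraph_lapMatrix_quadratic]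
  simp only [hbr, Finset.sum_add_distrib, ← Finset.sum_mul, Finset.sum_ite_eq', Finset.mem_univ,
    if_true, Finset.sum_const, Finset.card_univ, Fintype.card_fin, nsmul_eq_mul]
  apply le_of_eq
  ring

lemma card_eigenvalues_starGraph_gt {ε : ℝ} (hε : 0 < ε) (iₕ : Fin h) (hodd : Odd (a iₕ))
    (heven : ∀ i, i ≠ iₕ → Even (a i)) (hεe : ∀ i, ε * a i ≤ 2) (hεo : ε * (a iₕ + 1) ≤ 1)
    (hL : ((starGraph h a).lapMatrix ℝ).IsHermitian) :
    (Finset.univ.filter fun v => 2 - ε < hL.eigenvalues v).card ≤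
      Fintype.card {p : Σ i : Fin h, Fin (a i) // ¬ Odd ((p.2 : ℕ) + a p.1)} + 1 := by
  have key := hL.card_eigenvalues_le 1 (2 - ε)
    (LinearMap.pi fun o : Option {p : Σ i : Fin h, Fin (a i) // ¬ Odd ((p.2 : ℕ) + a p.1)} =>
      o.elim (branchFunctional iₕ 0) fun p =>
        ε • branchFunctional p.1.1 (p.1.2 + 1) -
          (branchFunctional p.1.1 p.1.2 + branchFunctional p.1.1 (p.1.2 + 2))) ?_
  · simpa using key
  intro x hx
  have hx0 : x (Sum.inl ()) = 0 := congrFun hx none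
  have hx' : ∀ (i : Fin h) (t : ℕ), t < a i → Even (t + a i) →
      ε * branchSeq x i (t + 1) = branchSeq x i t + branchSeq x i (t + 2) := fun i t ht ho =>
    sub_eq_zero.1 (congrFun hx (some ⟨⟨i, ⟨t, ht⟩⟩, Nat.not_odd_iff_even.2 ho⟩))
  have hbr : ∀ i, ∑ t ∈ Finset.range (a i), ε * branchSeq x i (t + 1) ^ 2 ≤
      branchSeq x i (a i) ^ 2 +
      2 * ∑ t ∈ Finset.range (a i), branchSeq x i t * branchSeq x i (t + 1) := by
    intro i
    by_cases hi : i = iₕ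
    · subst hi
      obtain ⟨M, hM⟩ := hodd
      have hb : ε * (M + 1) ≤ 1 / 2 := by
        rw [hM] at hεo
        push_cast at hεo
        linarith
      have := odd_branch_nonpos hε M hb (branchSeq x i) hx0 fun l hl =>
        hx' i (2 * l + 1) (by omega) ⟨l + M + 1, by omega⟩
      rw [hM]
      linarith
    · obtain ⟨N, hN⟩ := heven i hi
      rw [← two_mul] at hN
      have hb : ε * N ≤ 1 := by
        have := hεe i
        rw [hN] at this
        push_cast at this
        linarith
      have := even_branch_nonpos hε N hb (branchSeq x i) hx0 fun l hl =>
        hx' i (2 * l) (by omega) ⟨l + N, by omega⟩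
      rw [hN]
      linarith
  have hsum := Finset.sum_le_sum fun i (_ : i ∈ Finset.univ) => hbr i
  rw [starGraph_lapMatrix_quadratic, hx0]
  have hsq := sum_branchSeq_sq x
  rw [hx0] at hsq
  simp only [← Finset.mul_sum _ _ ε] at hsum
  have : ε * (x ⬝ᵥ x) =
      ε * ∑ i, ∑ t ∈ Finset.range (a i), branchSeq x i (t + 1) ^ 2 := by
    rw [hsq]; ring
  linarith

/-- Both `2 - 2 / n` and `2` are medians of the Laplacian spectrum. -/
lemma sum_abs_eigenvalues_starGraph (iₕ : Fin h) (hodd : Odd (a iₕ))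
    (heven : ∀ i, i ≠ iₕ → Even (a i)) (n : ℕ) (hn : n = 1 + ∑ i, a i) (hah : a iₕ < n / 2)
    (hL : ((starGraph h a).lapMatrix ℝ).IsHermitian) :
    ∑ v, |hL.eigenvalues v - (2 - 2 / n)| = ∑ v, |hL.eigenvalues v - 2| := by
  have hc := two_mul_card_odd_positions iₕ hodd heven
  have hcc := Fintype.card_subtype_compl
    fun p : Σ i : Fin h, Fin (a i) => Odd ((p.2 : ℕ) + a p.1)
  have hcV : Fintype.card (Σ i : Fin h, Fin (a i)) = ∑ i, a i := by simp
  have hnpos : (0 : ℝ) < n := by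
    have : 0 < n := by omega
    exact_mod_cast this
  refine sum_abs_sub_eq_of_card_le _ (by linarith [div_pos two_pos hnpos])
    (Fintype.card {p : Σ i : Fin h, Fin (a i) // Odd ((p.2 : ℕ) + a p.1)}) ?_ ?_ ?_
  · rw [hc, Fintype.card_sum, hcV, Fintype.card_unit]
  · refine (card_eigenvalues_starGraph_gt (div_pos two_pos hnpos) iₕ hodd heven ?_ ?_ hL).trans ?_
    · intro i
      have : a i ≤ n := by
        have := Finset.single_le_sum (f := a) (fun _ _ => Nat.zero_le _) (Finset.mem_univ i)
        omega
      have : (a i : ℝ) ≤ n := by exact_mod_cast this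
      rw [div_mul_eq_mul_div, div_le_iff₀ hnpos]
      linarith
    · have : 2 * (a iₕ + 1) ≤ n := by omega
      have : 2 * ((a iₕ : ℝ) + 1) ≤ n := by exact_mod_cast this
      rw [div_mul_eq_mul_div, div_le_iff₀ hnpos]
      linarith
    · omega
  · exact card_eigenvalues_starGraph_lt_two iₕ hodd heven hL

lemma degree_starGraph_inr (i : Fin h) (j : Fin (a i)) :
    ((starGraph h a).degree (Sum.inr ⟨i, j⟩) : ℝ) = if (j : ℕ) + 1 = a i then 1 else 2 := by
  rw [SimpleGraph.degree_eq_sum_if_adj]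
  simp only [ite_starGraph_adj, Finset.sum_add_distrib]
  rw [sum_starRel_right (fun _ => 1)]
  by_cases hj : (j : ℕ) + 1 = a i
  · rw [Finset.sum_eq_zero, if_pos hj, zero_add]
    rintro (_ | ⟨i', j'⟩) -
    · simp [starRel]
    · rw [if_neg]
      simp only [starRel]
      rintro ⟨e1, e2⟩
      obtain rfl := Fin.ext e1
      omega
  · have hlt : (j : ℕ) + 1 < a i := by omega
    rw [Finset.sum_eq_single (Sum.inr ⟨i, ⟨j + 1, hlt⟩⟩), if_neg hj]
    · simp [starRel]; norm_num
    · rintro (_ | ⟨i', j'⟩) - hne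
      · simp [starRel]
      · rw [if_neg]
        simp only [starRel]
        rintro ⟨e1, e2⟩
        exact hne (by rw [Sum.inr.injEq, sigma_fin_ext_iff]; exact ⟨(Fin.ext e1).symm, e2.symm⟩)
    · simp

lemma lapMatrix_starGraph_inr_inr (i i' : Fin h) (j : Fin (a i)) (j' : Fin (a i')) :
    ((starGraph h a).lapMatrix ℝ - (2 : ℝ) • 1) (Sum.inr ⟨i, j⟩) (Sum.inr ⟨i', j'⟩) =
      if i = i' ∧ ((j : ℕ) = j' ∧ (j : ℕ) + 1 = a i ∨ (j : ℕ) + 1 = j' ∨ (j' : ℕ) + 1 = j)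
        then -1 else 0 := by
  simp only [SimpleGraph.lapMatrix, SimpleGraph.degMatrix, Matrix.sub_apply, Matrix.smul_apply,
    Matrix.one_apply, Matrix.diagonal_apply, SimpleGraph.adjMatrix_apply, degree_starGraph_inr,
    starGraph_adj_iff, starRel, Sum.inr.injEq, sigma_fin_ext_iff, Fin.ext_iff, smul_eq_mul]
  by_cases h1 : (i : ℕ) = i' <;> by_cases h2 : (j : ℕ) = j' <;>
    by_cases h3 : (j : ℕ) + 1 = a i <;> simp [h1, h2, h3, eq_comm] <;> grind

lemma lapMatrix_starGraph_inl_inr (c : Unit) (i : Fin h) (j : Fin (a i)) :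
    ((starGraph h a).lapMatrix ℝ - (2 : ℝ) • 1) (Sum.inl c) (Sum.inr ⟨i, j⟩) =
      if (j : ℕ) = 0 then -1 else 0 := by
  simp only [SimpleGraph.lapMatrix, SimpleGraph.degMatrix, Matrix.sub_apply, Matrix.smul_apply,
    Matrix.one_apply, Matrix.diagonal_apply, SimpleGraph.adjMatrix_apply,
    starGraph_adj_iff, starRel]
  by_cases h0 : (j : ℕ) = 0 <;> simp [h0]

lemma lapMatrix_starGraph_inr_inl (c : Unit) (i : Fin h) (j : Fin (a i)) :
    ((starGraph h a).lapMatrix ℝ - (2 : ℝ) • 1) (Sum.inr ⟨i, j⟩) (Sum.inl c) =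
      if (j : ℕ) = 0 then -1 else 0 := by
  simp only [SimpleGraph.lapMatrix, SimpleGraph.degMatrix, Matrix.sub_apply, Matrix.smul_apply,
    Matrix.one_apply, Matrix.diagonal_apply, SimpleGraph.adjMatrix_apply,
    starGraph_adj_iff, starRel]
  by_cases h0 : (j : ℕ) = 0 <;> simp [h0]

/-- Apply a length-preserving involution `σ` of the branches to the positions satisfying `P`. -/
def swapPositions (σ : Equiv.Perm (Fin h)) (hσ : ∀ i, σ (σ i) = i) (haσ : ∀ i, a (σ i) = a i)
    (P : ℕ → Prop) [DecidablePred P] : Equiv.Perm (Unit ⊕ (Σ i : Fin h, Fin (a i))) :=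
  Equiv.sumCongr (Equiv.refl _) <| Function.Involutive.toPerm
    (fun p => ⟨if P p.2 then σ p.1 else p.1, Fin.cast (by split_ifs <;> simp [haσ]) p.2⟩) <| by
      rintro ⟨i, j⟩
      rw [sigma_fin_ext_iff]
      by_cases hP : P j <;> simp [hP, hσ]

lemma swapPositions_inl (σ : Equiv.Perm (Fin h)) (hσ : ∀ i, σ (σ i) = i)
    (haσ : ∀ i, a (σ i) = a i) (P : ℕ → Prop) [DecidablePred P] (c : Unit) :
    swapPositions σ hσ haσ P (Sum.inl c) = Sum.inl c := rfl

lemma swapPositions_inr (σ : Equiv.Perm (Fin h)) (hσ : ∀ i, σ (σ i) = i)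
    (haσ : ∀ i, a (σ i) = a i) (P : ℕ → Prop) [DecidablePred P] (i : Fin h) (j : Fin (a i)) :
    swapPositions σ hσ haσ P (Sum.inr ⟨i, j⟩) =
      Sum.inr ⟨if P j then σ i else i, Fin.cast (by split_ifs <;> simp [haσ]) j⟩ := rfl

lemma SimpleGraph.lapMatrix_sup_edge_apply {V : Type*} [Fintype V] [DecidableEq V]
    (G : SimpleGraph V) {s t : V} [DecidableRel G.Adj]
    [DecidableRel (G ⊔ SimpleGraph.edge s t).Adj] (hn : ¬ G.Adj s t) (hst : s ≠ t) (v w : V) :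
    (G ⊔ SimpleGraph.edge s t).lapMatrix ℝ v w = G.lapMatrix ℝ v w +
      ((if v = s then 1 else 0) - if v = t then 1 else 0) *
        ((if w = s then 1 else 0) - if w = t then 1 else 0) := by
  have hadj : ∀ v w, (if (G ⊔ SimpleGraph.edge s t).Adj v w then (1 : ℝ) else 0) =
      (if G.Adj v w then 1 else 0) + ((if v = s then (if w = t then 1 else 0) else 0) +
        (if v = t then (if w = s then 1 else 0) else 0)) := by
    intro v w
    simp only [SimpleGraph.sup_adj, SimpleGraph.edge_adj]
    have hn' : ¬ G.Adj t s := fun e => hn e.symm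
    by_cases h1 : v = s <;> by_cases h2 : v = t <;> by_cases h3 : w = s <;>
      by_cases h4 : w = t <;> simp_all
  have hdeg : ∀ v, ((G ⊔ SimpleGraph.edge s t).degree v : ℝ) =
      G.degree v + ((if v = s then 1 else 0) + if v = t then 1 else 0) := by
    intro v
    simp only [SimpleGraph.degree_eq_sum_if_adj, hadj, Finset.sum_add_distrib]
    by_cases h1 : v = s <;> by_cases h2 : v = t <;> simp [h1, h2]
  simp only [SimpleGraph.lapMatrix, SimpleGraph.degMatrix, Matrix.sub_apply,
    Matrix.diagonal_apply, SimpleGraph.adjMatrix_apply, hadj, hdeg]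
  by_cases h0 : v = w
  · subst h0
    by_cases h1 : v = s <;> by_cases h2 : v = t <;> simp_all
  · by_cases h1 : v = s <;> by_cases h2 : v = t <;> by_cases h3 : w = s <;>
      by_cases h4 : w = t <;> simp_all [sub_eq_add_neg, add_comm]

lemma inr_ne_inr_of_ne {i₁ i₂ : Fin h} (h12 : i₁ ≠ i₂) (j₁ : Fin (a i₁)) (j₂ : Fin (a i₂)) :
    (Sum.inr ⟨i₁, j₁⟩ : Unit ⊕ (Σ i : Fin h, Fin (a i))) ≠ Sum.inr ⟨i₂, j₂⟩ := by
  rw [Ne, Sum.inr.injEq, sigma_fin_ext_iff]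
  exact fun e => h12 e.1

lemma not_starGraph_adj_of_ne {i₁ i₂ : Fin h} (h12 : i₁ ≠ i₂) (j₁ : Fin (a i₁))
    (j₂ : Fin (a i₂)) : ¬ (starGraph h a).Adj (Sum.inr ⟨i₁, j₁⟩) (Sum.inr ⟨i₂, j₂⟩) := by
  rw [starGraph_adj_iff]
  simp only [starRel, ← Fin.ext_iff]
  rintro (⟨e, -⟩ | ⟨e, -⟩)
  exacts [h12 e, h12 e.symm]

/-- Joining the ends of two even branches of equal length permutes the rows and the columns
of `L - 2`: rows are swapped at odd, columns at even positions. -/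
lemma lapMatrix_starGraph_sup_edge (i₁ i₂ : Fin h) (h12 : i₁ ≠ i₂) (heq : a i₁ = a i₂)
    (hev : Even (a i₁)) (j₁ : Fin (a i₁)) (j₂ : Fin (a i₂)) (hj₁ : (j₁ : ℕ) + 1 = a i₁)
    (hj₂ : (j₂ : ℕ) + 1 = a i₂)
    [DecidableRel
      (starGraph h a ⊔ SimpleGraph.edge (Sum.inr ⟨i₁, j₁⟩) (Sum.inr ⟨i₂, j₂⟩)).Adj] :
    ∃ e f : Equiv.Perm (Unit ⊕ (Σ i : Fin h, Fin (a i))),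
      (starGraph h a ⊔ SimpleGraph.edge (Sum.inr ⟨i₁, j₁⟩) (Sum.inr ⟨i₂, j₂⟩)).lapMatrix ℝ
        - (2 : ℝ) • 1 = ((starGraph h a).lapMatrix ℝ - (2 : ℝ) • 1).submatrix e f := by
  have haσ : ∀ i, a (Equiv.swap i₁ i₂ i) = a i := fun i => by
    rw [Equiv.swap_apply_def]; grind
  refine ⟨swapPositions (Equiv.swap i₁ i₂) (Equiv.swap_apply_self i₁ i₂) haσ (fun t => Odd t),
    swapPositions (Equiv.swap i₁ i₂) (Equiv.swap_apply_self i₁ i₂) haσ (fun t => Even t), ?_⟩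
  ext v w
  rw [Matrix.sub_apply, SimpleGraph.lapMatrix_sup_edge_apply _
    (not_starGraph_adj_of_ne h12 j₁ j₂) (inr_ne_inr_of_ne h12 j₁ j₂), add_sub_right_comm,
    ← Matrix.sub_apply, Matrix.submatrix_apply]
  rcases v with c | ⟨i, j⟩ <;> rcases w with c' | ⟨i', j'⟩
  · rw [swapPositions_inl, swapPositions_inl]
    simp
  · rw [swapPositions_inl, swapPositions_inr]
    rw [lapMatrix_starGraph_inl_inr, lapMatrix_starGraph_inl_inr]
    simp
  · rw [swapPositions_inl, swapPositions_inr]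
    rw [lapMatrix_starGraph_inr_inl, lapMatrix_starGraph_inr_inl]
    simp
  · rw [swapPositions_inr, swapPositions_inr]
    rw [lapMatrix_starGraph_inr_inr, lapMatrix_starGraph_inr_inr]
    simp only [Fin.val_cast, Sum.inr.injEq, sigma_fin_ext_iff]
    have haO : ∀ P : Prop, [Decidable P] → a (if P then Equiv.swap i₁ i₂ i else i) = a i := by
      intro P _
      split_ifs <;> simp [haσ]
    simp only [haO]
    have hodd₁ : Odd (j₁ : ℕ) := by
      rw [← Nat.not_even_iff_odd]; rw [← hj₁, Nat.even_add_one] at hev; exact hev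
    have hj : (j₂ : ℕ) = j₁ := by omega
    rw [hj]
    have hinj := (Equiv.swap i₁ i₂).injective.eq_iff (a := i) (b := i')
    by_cases hpar : Odd (j : ℕ) ↔ Even (j' : ℕ)
    · have hne' : (j : ℕ) ≠ j' := by
        intro e
        rw [e, ← Nat.not_even_iff_odd] at hpar
        tauto
      by_cases ho : Odd (j : ℕ)
      · have he := hpar.1 ho
        have : (j' : ℕ) ≠ j₁ := fun e => Nat.not_even_iff_odd.2 hodd₁ (e ▸ he)
        simp [ho, he, hinj, hne', this]
      · have he : ¬ Even (j' : ℕ) := fun e => ho (hpar.2 e)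
        have : (j : ℕ) ≠ j₁ := fun e => ho (e ▸ hodd₁)
        simp [ho, he, hne', this]
    · have h1 : (j : ℕ) + 1 ≠ j' := by
        intro e
        rw [← e, Nat.even_add_one, Nat.not_even_iff_odd] at hpar
        tauto
      have h2 : (j' : ℕ) + 1 ≠ j := by
        intro e
        rw [← e, Nat.odd_add_one, Nat.not_odd_iff_even] at hpar
        tauto
      by_cases hjj : (j : ℕ) = j'
      · rw [← hjj]
        simp only [or_false, true_and, Nat.succ_ne_self, Equiv.swap_apply_def]
        rw [← hjj, ← Nat.not_even_iff_odd] at hpar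
        by_cases hjl : (j : ℕ) = j₁
        · have ho : Odd (j : ℕ) := hjl ▸ hodd₁
          have he : ¬ Even (j : ℕ) := Nat.not_even_iff_odd.2 ho
          simp only [hjl, and_true]
          grind
        · have ha₁ : (j : ℕ) + 1 = a i → i ≠ i₁ ∧ i ≠ i₂ := by
            intro e
            constructor <;> (rintro rfl; omega)
          by_cases he : Even (j : ℕ)
          · have ho : ¬ Odd (j : ℕ) := Nat.not_odd_iff_even.2 he
            simp only [ho, he, hjl, if_true, if_false, and_false]
            grind
          · have ho : Odd (j : ℕ) := Nat.not_even_iff_odd.1 he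
            simp only [ho, he, hjl, if_true, if_false, and_false]
            grind
      · have : ¬ ((j : ℕ) = j₁ ∧ (j' : ℕ) = j₁) := by omega
        simp only [h1, h2, hjj]
        grind

end Starlike

lemma LEnergy_eq_sum_eigenvalues {V : Type*} [Fintype V] [DecidableEq V] (G : SimpleGraph V)
    [DecidableRel G.Adj] [Fintype G.edgeSet] (hL : (G.lapMatrix ℝ).IsHermitian) (d : ℝ)
    (hd : 2 * (G.edgeFinset.card : ℝ) / (Fintype.card V : ℝ) = d) :
    LEnergy G = ∑ v, |hL.eigenvalues v - d| := by
  have hsum : ∑ v, |hL.eigenvalues v - d| =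
      ((G.lapMatrix ℝ).charpoly.roots.map fun μ => |μ - d|).sum := by
    rw [hL.roots_charpoly_eq_eigenvalues, Multiset.map_map]
    rfl
  rw [hsum, LEnergy, ← hd]
  congr!

/-- Let `G ∈ S_{n,k}` be the starlike tree on `n` vertices whose central vertex `u` is
adjacent to one end of each of `h ≥ 3` paths `P_{a 1}, …, P_{a h}`, where `a i` is even for
`i ≤ h-1`, the first two branches have `a i₁ = a i₂ = k ≥ 2` vertices, and the last branch
has `a iₕ < n/2` vertices, `a iₕ` odd. Let `G'` be obtained from `G` by adding an edge
between the ends farthest from `u` (index `k - 1`) of the two branches of length `k`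
(so `G'` is unicyclic, containing `C_{2k+1}`). Then `LE(G) = LE(G')`. -/
theorem starlike_equienergetic (h k n : ℕ) (hh : 3 ≤ h) (hk : 2 ≤ k) (a : Fin h → ℕ)
    (hpos : ∀ i, 1 ≤ a i)
    (i₁ i₂ iₕ : Fin h) (hi₁ : (i₁ : ℕ) = 0) (hi₂ : (i₂ : ℕ) = 1) (hiₕ : (iₕ : ℕ) = h - 1)
    (ha₁ : a i₁ = k) (ha₂ : a i₂ = k)
    (heven : ∀ i : Fin h, (i : ℕ) < h - 1 → Even (a i))
    (hodd : Odd (a iₕ))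
    (hn : n = 1 + ∑ i, a i) (hah : a iₕ < n / 2)
    (j₁ : Fin (a i₁)) (j₂ : Fin (a i₂)) (hj₁ : (j₁ : ℕ) = k - 1) (hj₂ : (j₂ : ℕ) = k - 1) :
    LEnergy (starGraph h a) =
      LEnergy (starGraph h a ⊔
        SimpleGraph.fromEdgeSet {s(Sum.inr ⟨i₁, j₁⟩, Sum.inr ⟨i₂, j₂⟩)}) := by
  have h12 : i₁ ≠ i₂ := by
    rintro rfl
    omega
  have heven' : ∀ i, i ≠ iₕ → Even (a i) := fun i hi =>
    heven i (by have := i.2; have := Fin.val_ne_of_ne hi; omega)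
  have hcard : (Fintype.card (Unit ⊕ (Σ i : Fin h, Fin (a i))) : ℝ) = n := by
    simp [hn]
  have hn0 : (n : ℝ) ≠ 0 := by
    rw [hn]
    positivity
  obtain ⟨e, f, hef⟩ := lapMatrix_starGraph_sup_edge i₁ i₂ h12 (ha₁.trans ha₂.symm)
    (heven i₁ (by omega)) j₁ j₂ (by omega) (by omega)
  have hL := (starGraph h a).isHermitian_lapMatrix ℝ
  have hL' := (starGraph h a ⊔ SimpleGraph.edge (Sum.inr ⟨i₁, j₁⟩)
    (Sum.inr ⟨i₂, j₂⟩)).isHermitian_lapMatrix ℝ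
  have hE : ((starGraph h a).edgeFinset.card : ℝ) = n - 1 := by
    rw [card_starGraph_edgeFinset, hn]
    push_cast
    ring
  have hE' : ((starGraph h a ⊔ SimpleGraph.edge (Sum.inr ⟨i₁, j₁⟩)
      (Sum.inr ⟨i₂, j₂⟩)).edgeFinset.card : ℝ) = n := by
    have := SimpleGraph.card_edgeFinset_sup_edge (starGraph h a)
      (not_starGraph_adj_of_ne h12 j₁ j₂) (inr_ne_inr_of_ne h12 j₁ j₂)
    have key : ((starGraph h a ⊔ SimpleGraph.edge (Sum.inr ⟨i₁, j₁⟩)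
      (Sum.inr ⟨i₂, j₂⟩)).edgeFinset.card : ℝ) = (starGraph h a).edgeFinset.card + 1 := by
      exact_mod_cast this
    rw [key, hE]
    ring
  have hedge : SimpleGraph.fromEdgeSet {s(Sum.inr ⟨i₁, j₁⟩, Sum.inr ⟨i₂, j₂⟩)} =
    SimpleGraph.edge (Sum.inr ⟨i₁, j₁⟩ : Unit ⊕ (Σ i : Fin h, Fin (a i)))
      (Sum.inr ⟨i₂, j₂⟩) := rfl
  rw [hedge, LEnergy_eq_sum_eigenvalues _ hL (2 - 2 / n) (by rw [hE, hcard]; field_simp),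
    LEnergy_eq_sum_eigenvalues _ hL' 2 (by rw [hE', hcard]; field_simp),
    sum_abs_eigenvalues_starGraph iₕ hodd heven' n hn hah hL]
  exact (hL.sum_abs_eigenvalues_sub_eq hL' 2 e f hef).symm
end

section
/- For every integer ℓ ≥ 2, there exist ℓ pairwise non-cospectral (with respect to the Laplacian) connected unicyclic graphs on n = 2ℓ² + 2ℓ + 2 vertices, all having the same Laplacian energy. -/
open scoped Classical

open Matrix Polynomial

namespace Matrix

variable {m V : Type*} [Fintype m] [DecidableEq m] [Fintype V] [DecidableEq V]

/-- If the columns of `J` are orthogonal of squared norm `c` and span an invariant subspace of `L`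
on which `L` acts as `B`, then perturbing `L` inside this subspace only changes the factor of the
characteristic polynomial coming from `B`. -/
theorem charpoly_add_mul_mul_transpose (L : Matrix V V ℝ) (B E : Matrix m m ℝ) (J : Matrix V m ℝ)
    (c : ℝ) (hJ : L * J = J * B) (hc : Jᵀ * J = c • 1) :
    (L + J * E * Jᵀ).charpoly * B.charpoly = L.charpoly * (B + c • E).charpoly := by
  refine mul_left_cancel₀ B.charpoly_monic.ne_zero (Polynomial.funext fun μ => ?_)
  simp only [eval_mul, eval_charpoly]
  by_cases hdet : (scalar m μ - B).det = 0
  · rw [hdet, zero_mul, zero_mul]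
  have hinv : (scalar m μ - B) * (scalar m μ - B)⁻¹ = 1 :=
    mul_nonsing_inv _ (isUnit_iff_ne_zero.mpr hdet)
  set K := scalar m μ - B with hK
  have hcomm : (scalar V μ - L) * J = J * K := by
    rw [hK, Matrix.sub_mul, Matrix.mul_sub, hJ, scalar_apply, scalar_apply,
      ← smul_eq_diagonal_mul, ← smul_one_eq_diagonal, Matrix.mul_smul, Matrix.mul_one]
  have hL : scalar V μ - (L + J * E * Jᵀ) = (scalar V μ - L) * (1 - J * K⁻¹ * E * Jᵀ) := by
    have : (scalar V μ - L) * (J * K⁻¹ * E * Jᵀ) = J * E * Jᵀ := by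
      rw [← Matrix.mul_assoc, ← Matrix.mul_assoc, ← Matrix.mul_assoc, hcomm, Matrix.mul_assoc J,
        hinv, Matrix.mul_one]
    rw [Matrix.mul_sub, this, Matrix.mul_one, sub_sub]
  have hB : scalar m μ - (B + c • E) = K * (1 - c • (K⁻¹ * E)) := by
    rw [Matrix.mul_sub, Matrix.mul_smul, ← Matrix.mul_assoc, hinv, Matrix.one_mul, Matrix.mul_one,
      hK, sub_sub]
  have hdet' : (1 - J * K⁻¹ * E * Jᵀ).det = (1 - c • (K⁻¹ * E)).det := by
    rw [det_one_sub_mul_comm, Matrix.mul_assoc J, ← Matrix.mul_assoc, hc, Matrix.smul_mul,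
      Matrix.one_mul]
  rw [hL, hB, det_mul, det_mul, hdet']
  ring

theorem roots_charpoly_scalar_sub (B : Matrix m m ℝ) (c : ℝ) :
    (scalar m c - B).charpoly.roots = B.charpoly.roots.map (fun x => c - x) := by
  have h : (scalar m c - B).charpoly =
      C ((-1) ^ Fintype.card m) * B.charpoly.comp (C (-1) * X + C c) := by
    refine Polynomial.funext fun μ => ?_
    have : scalar m μ - (scalar m c - B) = -(scalar m (-1 * μ + c) - B) := by
      rw [map_add, neg_one_mul, map_neg]; abel
    rw [eval_charpoly, this, det_neg]
    simp [eval_charpoly, eval_comp]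
  rw [h, roots_C_mul _ (by simp),
    ← map_roots_comp_C_mul_X_add_C B.charpoly (-1) c (by simp), Multiset.map_map]
  simp

/-- The nilpotent matrix with ones just above the diagonal. -/
def shiftMatrix (k : ℕ) : Matrix (Fin k) (Fin k) ℝ :=
  of fun i j => if (i : ℕ) + 1 = j then 1 else 0

/-- The Laplacian of a path on `k` vertices, grounded at its last vertex. -/
def groundedPath (k : ℕ) : Matrix (Fin k) (Fin k) ℝ :=
  (1 - shiftMatrix k)ᵀ * (1 - shiftMatrix k)

theorem shiftMatrix_transpose_mul_self (k : ℕ) :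
    (shiftMatrix (k + 1))ᵀ * shiftMatrix (k + 1) = 1 - single 0 0 1 := by
  ext i j
  simp only [mul_apply, transpose_apply, shiftMatrix, of_apply, sub_apply, one_apply]
  rcases Fin.eq_zero_or_eq_succ i with rfl | ⟨i, rfl⟩
  · rcases eq_or_ne j 0 with rfl | hj
    · simp
    · simp [hj.symm]
  · rw [Finset.sum_eq_single i.castSucc]
    · rw [single_apply_of_row_ne (Fin.succ_ne_zero i).symm]
      simp [Fin.ext_iff]
    · intro b _ hb
      have : ¬ (b : ℕ) + 1 = (i.succ : Fin (k + 1)) := by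
        simpa [Fin.ext_iff] using hb
      rw [if_neg this, zero_mul]
    · simp

theorem groundedPath_succ (k : ℕ) : groundedPath (k + 1) =
    scalar _ 2 - shiftMatrix (k + 1) - (shiftMatrix (k + 1))ᵀ - single 0 0 1 := by
  rw [groundedPath, transpose_sub, Matrix.sub_mul, Matrix.mul_sub, Matrix.mul_sub,
    shiftMatrix_transpose_mul_self]
  have : (scalar (Fin (k + 1)) (2 : ℝ)) = 1 + 1 := by
    rw [← one_add_one_eq_two, map_add, map_one]
  simp [this]
  abel

/-- Conjugating by alternating signs turns `4 - B` into `B` with its corner raised by two. -/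
theorem charpoly_groundedPath_add_single (k : ℕ) :
    (groundedPath (k + 1) + (2 : ℝ) • single 0 0 1).charpoly =
      (scalar _ 4 - groundedPath (k + 1)).charpoly := by
  let S : Matrix (Fin (k + 1)) (Fin (k + 1)) ℝ := diagonal fun i => (-1) ^ (i : ℕ)
  have hS : S * S = 1 := by
    simp only [S, diagonal_mul_diagonal, ← mul_pow]
    simp
  have hN : S * shiftMatrix (k + 1) * S = -shiftMatrix (k + 1) := by
    ext i j
    simp only [S, diagonal_mul, mul_diagonal, shiftMatrix, of_apply, neg_apply]
    split_ifs with h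
    · rw [← h, pow_succ, mul_one, ← mul_assoc, ← mul_pow]
      simp
    · simp
  have hN' : S * (shiftMatrix (k + 1))ᵀ * S = -(shiftMatrix (k + 1))ᵀ := by
    have := congrArg transpose hN
    simpa [S, Matrix.mul_assoc] using this
  have hE : S * single 0 0 1 * S = single 0 0 1 := by
    ext i j
    simp only [S, diagonal_mul, mul_diagonal]
    by_cases hi : i = 0
    · by_cases hj : j = 0
      · simp [hi, hj]
      · rw [single_apply_of_col_ne _ _ (Ne.symm hj)]; simp
    · rw [single_apply_of_row_ne (Ne.symm hi)]; simp
  have hc (c : ℝ) : S * scalar _ c * S = scalar _ c := by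
    rw [← scalar_comm c (fun _ => mul_comm _ _) S, Matrix.mul_assoc, hS, Matrix.mul_one]
  have h : groundedPath (k + 1) + (2 : ℝ) • single 0 0 1 =
      S * (scalar _ 4 - groundedPath (k + 1)) * S := by
    simp only [groundedPath_succ, Matrix.mul_sub, Matrix.sub_mul, hc, hN, hN', hE]
    have : (scalar (Fin (k + 1)) (4 : ℝ)) = scalar _ 2 + scalar _ 2 := by
      rw [← map_add]; norm_num
    rw [this, two_smul]
    abel
  rw [h, Matrix.mul_assoc, charpoly_mul_comm, Matrix.mul_assoc, hS, Matrix.mul_one]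

theorem det_groundedPath (k : ℕ) : (groundedPath k).det = 1 := by
  have : (1 - shiftMatrix k).det = 1 := by
    rw [det_of_isUpperTriangular]
    · simp [shiftMatrix]
    · intro i j hij
      have h1 : i ≠ j := by rintro rfl; exact lt_irrefl _ hij
      have h2 : ¬ (i : ℕ) + 1 = j := by
        have : (j : ℕ) < i := hij
        omega
      simp [shiftMatrix, h1, h2]
  rw [groundedPath, det_mul, det_transpose, this, one_mul]

theorem det_groundedPath_add_single (k : ℕ) :
    (groundedPath (k + 1) + (2 : ℝ) • single 0 0 1).det = (2 * k + 3 : ℝ) := by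
  let u : Fin (k + 1) → ℝ := fun i => (k : ℝ) + 1 - i
  have hu : (1 - shiftMatrix (k + 1)) *ᵥ u = 1 := by
    ext i
    rw [sub_mulVec, one_mulVec]
    simp only [Pi.sub_apply, mulVec, dotProduct, shiftMatrix, of_apply, Pi.one_apply, ite_mul,
      one_mul, zero_mul]
    rcases Fin.eq_castSucc_or_eq_last i with ⟨i, rfl⟩ | rfl
    · rw [Finset.sum_eq_single i.succ]
      · simp [u]
      · intro b _ hb
        rw [if_neg]
        intro h
        exact hb (Fin.ext (by simpa using h.symm))
      · simp
    · rw [Finset.sum_eq_zero]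
      · simp [u]
      · intro b _
        rw [if_neg]
        have := b.isLt
        simp; omega
  have hone : (1 - shiftMatrix (k + 1))ᵀ *ᵥ 1 = Pi.single 0 1 := by
    ext i
    rw [transpose_sub, sub_mulVec, transpose_one, one_mulVec]
    simp only [Pi.sub_apply, mulVec, dotProduct, shiftMatrix, of_apply, Pi.one_apply,
      transpose_apply, mul_one]
    rcases Fin.eq_zero_or_eq_succ i with rfl | ⟨i, rfl⟩
    · simp
    · rw [Finset.sum_eq_single i.castSucc]
      · simp
      · intro b _ hb
        rw [if_neg]
        intro h
        exact hb (Fin.ext (by simpa using h))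
      · simp
  have hB : groundedPath (k + 1) *ᵥ u = Pi.single 0 1 := by
    rw [groundedPath, ← mulVec_mulVec, hu, hone]
  have h : groundedPath (k + 1) + (2 : ℝ) • single 0 0 1 =
      groundedPath (k + 1) *
        (1 + replicateCol Unit u * replicateRow Unit (Pi.single 0 (2 : ℝ))) := by
    rw [Matrix.mul_add, Matrix.mul_one, ← Matrix.mul_assoc, ← replicateCol_mulVec, hB]
    congr 1
    ext i j
    by_cases hi : i = 0
    · by_cases hj : j = 0
      · simp [hi, hj, mul_apply]
      · simp [mul_apply, hj, Ne.symm hj]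
    · simp [mul_apply, hi, Ne.symm hi]
  rw [h, det_mul, det_groundedPath, det_one_add_replicateCol_mul_replicateRow]
  simp [u]
  ring

end Matrix

namespace SimpleGraph

variable {V : Type*}

/-- The graph joining every vertex to its parent. -/
def parentGraph (p : V → V) : SimpleGraph V := fromRel fun v w => p v = w

/-- The graph joining every vertex to its parent, with one further edge between `s` and `t`. -/
def augmentedParentGraph (p : V → V) (s t : V) : SimpleGraph V := parentGraph p ⊔ edge s t

theorem connected_parentGraph (p : V → V) (root : V) (rank : V → ℕ)
    (hrank : ∀ v, v ≠ root → rank (p v) < rank v) : (parentGraph p).Connected := by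
  have hreach (n : ℕ) : ∀ v, rank v = n → (parentGraph p).Reachable v root := by
    induction n using Nat.strong_induction_on with
    | _ n ih =>
      intro v hv
      by_cases hroot : v = root
      · rw [hroot]
      · have hlt := hrank v hroot
        have hadj : (parentGraph p).Adj v (p v) := by
          refine (fromRel_adj _ _ _).mpr ⟨?_, Or.inl rfl⟩
          intro h
          rw [← h] at hlt
          exact lt_irrefl _ hlt
        exact hadj.reachable.trans (ih _ (hv ▸ hlt) _ rfl)
  exact (connected_iff_exists_forall_reachable _).mpr ⟨root, fun v => (hreach _ v rfl).symm⟩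

variable [Fintype V] [DecidableEq V]

/-- The matrix of the parent function. -/
def parentMatrix (p : V → V) : Matrix V V ℝ := of fun v w => if p v = w then 1 else 0

theorem parentMatrix_mulVec (p : V → V) (x : V → ℝ) : parentMatrix p *ᵥ x = x ∘ p := by
  ext v
  simp [parentMatrix, mulVec, dotProduct]

theorem lapMatrix_augmentedParentGraph (p : V → V) (h2 : ∀ v, p (p v) = v → p v = v) {s t : V}
    (hst : s ≠ t) (hs : p s ≠ t) (ht : p t ≠ s) :
    (augmentedParentGraph p s t).lapMatrix ℝ =
      (1 - parentMatrix p)ᵀ * (1 - parentMatrix p) +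
        vecMulVec (Pi.single s 1 - Pi.single t 1) (Pi.single s 1 - Pi.single t 1) := by
  have key {A B : Matrix V V ℝ} (hA : A *ᵥ 1 = 0) (hB : B *ᵥ 1 = 0)
      (hAB : ∀ x y, x ≠ y → A x y = B x y) : A = B := by
    have hsum (x : V) : A x x + ∑ y ∈ Finset.univ.erase x, A x y =
        B x x + ∑ y ∈ Finset.univ.erase x, B x y := by
      rw [Finset.add_sum_erase _ _ (Finset.mem_univ x), Finset.add_sum_erase _ _ (Finset.mem_univ x)]
      simpa [mulVec, dotProduct] using congrFun (hA.trans hB.symm) x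
    ext x y
    by_cases hxy : x = y
    · subst hxy
      have := hsum x
      rwa [Finset.sum_congr rfl fun y hy => hAB x y (Finset.ne_of_mem_erase hy).symm,
        add_left_inj] at this
    · exact hAB x y hxy
  refine key (lapMatrix_mulVec_const_eq_zero ..) ?_ fun x y hxy => ?_
  · rw [add_mulVec, ← mulVec_mulVec, sub_mulVec, one_mulVec, parentMatrix_mulVec]
    have : (1 : V → ℝ) ∘ p = 1 := rfl
    simp [this, vecMulVec_mulVec, sub_dotProduct]
  · have hPP : ((parentMatrix p)ᵀ * parentMatrix p) x y = 0 := by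
      rw [mul_apply]
      refine Finset.sum_eq_zero fun v _ => ?_
      simp only [parentMatrix, transpose_apply, of_apply]
      split_ifs with h1 h2
      · exact absurd (h1.symm.trans h2) hxy
      all_goals simp
    have hexp : ((1 - parentMatrix p)ᵀ * (1 - parentMatrix p) : Matrix V V ℝ) x y =
        -(if p x = y then 1 else 0) - (if p y = x then 1 else 0) := by
      rw [transpose_sub, transpose_one, Matrix.sub_mul, Matrix.mul_sub, Matrix.mul_sub,
        Matrix.one_mul, Matrix.one_mul, Matrix.mul_one]
      simp only [Matrix.sub_apply, hPP, one_apply_ne hxy]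
      simp [parentMatrix]
    have hcyc : ¬ (p x = y ∧ p y = x) := by
      rintro ⟨h, h'⟩
      exact hxy ((h2 x (by rw [h, h'])).symm.trans h)
    have hadj : (augmentedParentGraph p s t).Adj x y ↔
        (p x = y ∨ p y = x) ∨ (x = s ∧ y = t ∨ x = t ∧ y = s) := by
      simp [augmentedParentGraph, parentGraph, edge_adj, hxy]
    rw [Matrix.add_apply, hexp]
    simp only [lapMatrix, Matrix.sub_apply, degMatrix, diagonal_apply_ne _ hxy, adjMatrix_apply,
      hadj, vecMulVec_apply, Pi.sub_apply, Pi.single_apply]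
    clear hexp hPP key h2
    grind

theorem card_edgeFinset_augmentedParentGraph (p : V → V) (root : V)
    (hroot : ∀ v, p v = v ↔ v = root) (h2 : ∀ v, p (p v) = v → p v = v) {s t : V}
    (hst : s ≠ t) (hs : p s ≠ t) (ht : p t ≠ s) :
    (augmentedParentGraph p s t).edgeFinset.card = Fintype.card V := by
  have htrace := congrArg trace (lapMatrix_augmentedParentGraph p h2 hst hs ht)
  have hleft : trace ((augmentedParentGraph p s t).lapMatrix ℝ) =
      2 * ((augmentedParentGraph p s t).edgeFinset.card : ℝ) := by
    have := sum_degrees_eq_twice_card_edges (augmentedParentGraph p s t)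
    simp only [trace, diag_apply, lapMatrix, Matrix.sub_apply, degMatrix, diagonal_apply_eq,
      adjMatrix_apply, SimpleGraph.irrefl, if_false, sub_zero]
    exact_mod_cast this
  have hrow (v : V) : ((1 - parentMatrix p) * (1 - parentMatrix p)ᵀ : Matrix V V ℝ) v v =
      2 - if v = root then 2 else 0 := by
    rw [mul_apply]
    by_cases hv : v = root
    · have := (hroot v).mpr hv
      rw [if_pos hv, Finset.sum_eq_zero, sub_self]
      intro w _
      simp [parentMatrix, one_apply, this]
    · have hne : p v ≠ v := fun h => hv ((hroot v).mp h)
      have (w : V) : (1 - parentMatrix p) v w * (1 - parentMatrix p)ᵀ w v =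
          (if v = w then 1 else 0) + (if p v = w then 1 else 0) := by
        simp only [parentMatrix, one_apply, transpose_apply, Matrix.sub_apply, of_apply]
        grind
      simp only [this, Finset.sum_add_distrib, Finset.sum_ite_eq, Finset.mem_univ, if_true, hv,
        if_false]
      norm_num
  have hvec : trace (vecMulVec (Pi.single s 1 - Pi.single t 1 : V → ℝ)
      (Pi.single s 1 - Pi.single t 1)) = 2 := by
    rw [trace_vecMulVec]
    simp [hst, hst.symm]
    norm_num
  rw [hleft, trace_add, trace_mul_comm, hvec] at htrace
  simp only [trace, diag_apply, hrow, Finset.sum_sub_distrib, Finset.sum_const, Finset.card_univ,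
    Finset.sum_ite_eq', Finset.mem_univ, if_true, nsmul_eq_mul] at htrace
  have : ((augmentedParentGraph p s t).edgeFinset.card : ℝ) = Fintype.card V := by linarith
  exact_mod_cast this

theorem Iso.charpoly_lapMatrix_eq {W : Type*} [Fintype W] [DecidableEq W] {G : SimpleGraph V}
    {H : SimpleGraph W} (f : G ≃g H) : (H.lapMatrix ℝ).charpoly = (G.lapMatrix ℝ).charpoly := by
  have : H.lapMatrix ℝ = reindex f.toEquiv f.toEquiv (G.lapMatrix ℝ) := by
    ext x y
    obtain ⟨x, rfl⟩ := f.surjective x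
    obtain ⟨y, rfl⟩ := f.surjective y
    have hx : f.toEquiv.symm (f x) = x := f.toEquiv.symm_apply_apply x
    have hy : f.toEquiv.symm (f y) = y := f.toEquiv.symm_apply_apply y
    simp only [reindex_apply, submatrix_apply, hx, hy, lapMatrix, Matrix.sub_apply, degMatrix,
      diagonal_apply, adjMatrix_apply, f.map_adj_iff, f.injective.eq_iff, f.degree_eq]
  rw [this, charpoly_reindex]

end SimpleGraph

/-- The vertices of a spider: a body, two legs with `j + 1` vertices for every `j < ℓ`, and
further feet attached directly to the body. -/
abbrev SpiderVertex (ℓ : ℕ) : Type :=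
  Option (((Σ j : Fin ℓ, Fin (j + 1)) × Bool) ⊕ Fin (ℓ ^ 2 + ℓ + 1))

namespace SpiderVertex

variable {ℓ : ℕ}

theorem card_eq (ℓ : ℕ) : Fintype.card (SpiderVertex ℓ) = 2 * ℓ ^ 2 + 2 * ℓ + 2 := by
  have h : ∑ j : Fin ℓ, ((j : ℕ) + 1) = ∑ j ∈ Finset.range (ℓ + 1), j := by
    rw [Finset.sum_range_succ', Fin.sum_univ_eq_sum_range (fun j => j + 1), add_zero]
  have h' := Finset.sum_range_id_mul_two (ℓ + 1)
  rw [Nat.add_sub_cancel] at h'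
  simp only [Fintype.card_option, Fintype.card_sum, Fintype.card_prod, Fintype.card_sigma,
    Fintype.card_fin, Fintype.card_bool, h, h']
  ring

/-- The `i`-th vertex of a leg, counted from its tip. -/
def leg (k : Fin ℓ) (i : Fin (k + 1)) (b : Bool) : SpiderVertex ℓ := some (.inl (⟨k, i⟩, b))

theorem leg_inj {k : Fin ℓ} {i j : Fin (k + 1)} {b c : Bool} :
    leg k i b = leg k j c ↔ i = j ∧ b = c := by
  simp [leg]

/-- The neighbour of a vertex in the direction of the body. -/
def parent : SpiderVertex ℓ → SpiderVertex ℓ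
  | some (.inl (⟨j, i⟩, b)) => if h : (i : ℕ) + 1 < j + 1 then leg j ⟨i + 1, h⟩ b else none
  | _ => none

/-- The distance to the body. -/
def height : SpiderVertex ℓ → ℕ
  | some (.inl (⟨j, i⟩, _)) => j + 1 - i
  | some (.inr _) => 1
  | none => 0

theorem height_parent_lt (v : SpiderVertex ℓ) (hv : v ≠ none) : height (parent v) < height v := by
  rcases v with _ | ⟨⟨j, i⟩, b⟩ | v
  · exact absurd rfl hv
  · have := i.isLt
    by_cases h : (i : ℕ) + 1 < j + 1
    · simp only [parent, height, dif_pos h, leg]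
      omega
    · simp only [parent, height, dif_neg h]
      omega
  · simp [parent, height]

theorem parent_eq_self_iff (v : SpiderVertex ℓ) : parent v = v ↔ v = none := by
  refine ⟨fun h => ?_, by rintro rfl; rfl⟩
  by_contra hv
  have := height_parent_lt v hv
  rw [h] at this
  exact lt_irrefl _ this

theorem parent_eq_self_of_parent_parent_eq (v : SpiderVertex ℓ) (h : parent (parent v) = v) :
    parent v = v := by
  by_cases hv : v = none
  · exact (parent_eq_self_iff v).mpr hv
  · have hlt := height_parent_lt v hv
    by_cases hp : parent v = none
    · rw [hp] at h
      exact absurd h.symm hv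
    · have := height_parent_lt _ hp
      rw [h] at this
      omega

theorem parent_leg_last (k : Fin ℓ) (b : Bool) : parent (leg k (Fin.last k) b) = none := by
  simp [parent, leg]

theorem parent_leg_castSucc (k : Fin ℓ) (i : Fin k) (b : Bool) :
    parent (leg k i.castSucc b) = leg k i.succ b := by
  have h : ((i.castSucc : Fin (k + 1)) : ℕ) + 1 < k + 1 := by simp
  simp only [leg, parent, dif_pos h]
  rfl

theorem parent_ne_leg_zero (v : SpiderVertex ℓ) (k : Fin ℓ) (b : Bool) : parent v ≠ leg k 0 b := by
  rcases v with _ | ⟨⟨j, i⟩, c⟩ | v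
  · simp [parent, leg]
  · by_cases h : (i : ℕ) + 1 < j + 1
    · simp only [parent, dif_pos h, leg]
      intro h'
      simp only [Option.some.injEq, Sum.inl.injEq, Prod.mk.injEq, Sigma.mk.injEq] at h'
      obtain ⟨⟨rfl, h'⟩, -⟩ := h'
      exact absurd (congrArg Fin.val (eq_of_heq h')) (Nat.succ_ne_zero _)
    · simp [parent, dif_neg h, leg]
  · simp [parent, leg]

theorem parent_eq_leg_succ_iff (v : SpiderVertex ℓ) (k : Fin ℓ) (i : Fin k) (b : Bool) :
    parent v = leg k i.succ b ↔ v = leg k i.castSucc b := by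
  refine ⟨fun hleg => ?_, fun h => h ▸ parent_leg_castSucc k i b⟩
  rcases v with _ | ⟨⟨j, a⟩, c⟩ | v
  · simp [parent, leg] at hleg
  · by_cases h : (a : ℕ) + 1 < j + 1
    · simp only [parent, dif_pos h, leg] at hleg
      simp only [Option.some.injEq, Sum.inl.injEq, Prod.mk.injEq, Sigma.mk.injEq] at hleg
      obtain ⟨⟨rfl, hleg⟩, rfl⟩ := hleg
      rw [leg, show a = i.castSucc by simpa [Fin.ext_iff] using hleg]
    · simp [parent, dif_neg h, leg] at hleg
  · simp [parent, leg] at hleg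

/-- The columns are the vectors supported on a pair of legs that are antisymmetric under swapping
the two legs. -/
def antisymmetrizer (k : Fin ℓ) : Matrix (SpiderVertex ℓ) (Fin (k + 1)) ℝ :=
  of fun v i => (if v = leg k i true then 1 else 0) - (if v = leg k i false then 1 else 0)

theorem transpose_antisymmetrizer_mul {m : Type*} (k : Fin ℓ) (M : Matrix (SpiderVertex ℓ) m ℝ) :
    (antisymmetrizer k)ᵀ * M = of fun i w => M (leg k i true) w - M (leg k i false) w := by
  ext i w
  simp [mul_apply, antisymmetrizer, sub_mul, Finset.sum_sub_distrib]

theorem parentMatrix_mul_antisymmetrizer (k : Fin ℓ) :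
    SimpleGraph.parentMatrix (parent (ℓ := ℓ)) * antisymmetrizer k =
      antisymmetrizer k * shiftMatrix (k + 1) := by
  ext v i
  have h : (SimpleGraph.parentMatrix (parent (ℓ := ℓ)) * antisymmetrizer k) v i =
      antisymmetrizer k (parent v) i := by
    simp [mul_apply, SimpleGraph.parentMatrix]
  rw [h, mul_apply]
  rcases Fin.eq_zero_or_eq_succ i with rfl | ⟨i, rfl⟩
  · simp [antisymmetrizer, shiftMatrix, parent_ne_leg_zero]
  · rw [Finset.sum_eq_single i.castSucc]
    · simp [antisymmetrizer, shiftMatrix, parent_eq_leg_succ_iff]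
    · intro a _ ha
      have : ¬ (a : ℕ) + 1 = (i.succ : Fin (k + 1)) := by simpa [Fin.ext_iff] using ha
      rw [shiftMatrix, of_apply, if_neg this, mul_zero]
    · simp

theorem transpose_antisymmetrizer_mul_parentMatrix (k : Fin ℓ) :
    (antisymmetrizer k)ᵀ * SimpleGraph.parentMatrix (parent (ℓ := ℓ)) =
      shiftMatrix (k + 1) * (antisymmetrizer k)ᵀ := by
  rw [transpose_antisymmetrizer_mul]
  ext i w
  rw [mul_apply]
  rcases Fin.eq_castSucc_or_eq_last i with ⟨i, rfl⟩ | rfl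
  · rw [Finset.sum_eq_single i.succ]
    · simp [antisymmetrizer, shiftMatrix, SimpleGraph.parentMatrix, parent_leg_castSucc,
        eq_comm]
    · intro a _ ha
      have : ¬ ((i.castSucc : Fin (k + 1)) : ℕ) + 1 = a := fun h =>
        ha (Fin.ext (by simpa using h.symm))
      rw [shiftMatrix, of_apply, if_neg this, zero_mul]
    · simp
  · rw [Finset.sum_eq_zero]
    · simp [SimpleGraph.parentMatrix, parent_leg_last]
    · intro a _
      have : ¬ ((Fin.last k : Fin (k + 1)) : ℕ) + 1 = a := by
        have := a.isLt
        simp only [Fin.val_last]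
        omega
      rw [shiftMatrix, of_apply, if_neg this, zero_mul]

theorem transpose_antisymmetrizer_mul_self (k : Fin ℓ) :
    (antisymmetrizer k)ᵀ * antisymmetrizer k = (2 : ℝ) • 1 := by
  rw [transpose_antisymmetrizer_mul]
  ext i j
  by_cases h : i = j
  · simp [antisymmetrizer, leg_inj, h]
    norm_num
  · simp [antisymmetrizer, leg_inj, h]

/-- The Laplacian of the spider. -/
def laplacian (ℓ : ℕ) : Matrix (SpiderVertex ℓ) (SpiderVertex ℓ) ℝ :=
  (1 - SimpleGraph.parentMatrix (parent (ℓ := ℓ)))ᵀ *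
    (1 - SimpleGraph.parentMatrix (parent (ℓ := ℓ)))

theorem laplacian_mul_antisymmetrizer (k : Fin ℓ) :
    laplacian ℓ * antisymmetrizer k = antisymmetrizer k * groundedPath (k + 1) := by
  have h := congrArg transpose (transpose_antisymmetrizer_mul_parentMatrix k)
  rw [transpose_mul, transpose_mul, transpose_transpose] at h
  rw [laplacian, groundedPath, Matrix.mul_assoc, Matrix.sub_mul, parentMatrix_mul_antisymmetrizer,
    Matrix.one_mul]
  simp only [transpose_sub, transpose_one, Matrix.sub_mul, Matrix.mul_sub, Matrix.one_mul,
    Matrix.mul_one, ← Matrix.mul_assoc, h]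

/-- The spider with an edge between the tips of its `k`-th pair of legs. -/
def closedSpider (k : Fin ℓ) : SimpleGraph (SpiderVertex ℓ) :=
  SimpleGraph.augmentedParentGraph parent (leg k 0 true) (leg k 0 false)

theorem connected_closedSpider (k : Fin ℓ) : (closedSpider k).Connected :=
  (SimpleGraph.connected_parentGraph parent none height height_parent_lt).mono le_sup_left

theorem leg_true_ne_leg_false (k : Fin ℓ) : leg k 0 true ≠ leg k 0 false := by
  simp [leg_inj]

theorem card_edgeFinset_closedSpider (k : Fin ℓ) :
    (closedSpider k).edgeFinset.card = Fintype.card (SpiderVertex ℓ) :=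
  SimpleGraph.card_edgeFinset_augmentedParentGraph parent none parent_eq_self_iff
    parent_eq_self_of_parent_parent_eq (leg_true_ne_leg_false k) (parent_ne_leg_zero _ _ _)
    (parent_ne_leg_zero _ _ _)

theorem lapMatrix_closedSpider (k : Fin ℓ) : (closedSpider k).lapMatrix ℝ =
    laplacian ℓ +
      antisymmetrizer k * single (0 : Fin (k + 1)) (0 : Fin (k + 1)) (1 : ℝ) *
        (antisymmetrizer k)ᵀ := by
  have h : antisymmetrizer k * single (0 : Fin (k + 1)) (0 : Fin (k + 1)) (1 : ℝ) *
        (antisymmetrizer k)ᵀ =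
      vecMulVec (Pi.single (leg k 0 true) 1 - Pi.single (leg k 0 false) 1)
        (Pi.single (leg k 0 true) 1 - Pi.single (leg k 0 false) 1) := by
    have hcol : (antisymmetrizer k).col 0 =
        Pi.single (leg k 0 true) 1 - Pi.single (leg k 0 false) 1 := by
      ext v
      simp [antisymmetrizer, Pi.single_apply]
    rw [single_eq_single_vecMulVec_single, mul_vecMulVec, vecMulVec_mul, mulVec_single_one,
      vecMul_transpose, mulVec_single_one, hcol]
  rw [h]
  exact SimpleGraph.lapMatrix_augmentedParentGraph parent parent_eq_self_of_parent_parent_eq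
    (leg_true_ne_leg_false k) (parent_ne_leg_zero _ _ _) (parent_ne_leg_zero _ _ _)

theorem charpoly_closedSpider (k : Fin ℓ) :
    ((closedSpider k).lapMatrix ℝ).charpoly * (groundedPath (k + 1)).charpoly =
      (laplacian ℓ).charpoly * (groundedPath (k + 1) + (2 : ℝ) • single 0 0 1).charpoly := by
  rw [lapMatrix_closedSpider]
  exact charpoly_add_mul_mul_transpose _ _ _ _ _ (laplacian_mul_antisymmetrizer k)
    (transpose_antisymmetrizer_mul_self k)

theorem sum_abs_roots_closedSpider (k : Fin ℓ) :
    (((closedSpider k).lapMatrix ℝ).charpoly.roots.map fun μ => |μ - 2|).sum =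
      ((laplacian ℓ).charpoly.roots.map fun μ => |μ - 2|).sum := by
  have h := congrArg roots (charpoly_closedSpider k)
  rw [charpoly_groundedPath_add_single,
    roots_mul (mul_ne_zero (charpoly_monic _).ne_zero (charpoly_monic _).ne_zero),
    roots_mul (mul_ne_zero (charpoly_monic _).ne_zero (charpoly_monic _).ne_zero),
    roots_charpoly_scalar_sub] at h
  have h' := congrArg (fun s : Multiset ℝ => (s.map fun μ => |μ - 2|).sum) h
  have hrefl (x : ℝ) : |4 - x - 2| = |x - 2| := by
    rw [← abs_neg]; ring_nf
  simp only [Multiset.map_add, Multiset.sum_add, Multiset.map_map, Function.comp_def,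
    hrefl] at h'
  exact add_right_cancel h'

theorem closedSpider_eq_of_roots_eq {i j : Fin ℓ}
    (h : ((closedSpider i).lapMatrix ℝ).charpoly.roots =
      ((closedSpider j).lapMatrix ℝ).charpoly.roots) : i = j := by
  have hχ : ((closedSpider i).lapMatrix ℝ).charpoly = ((closedSpider j).lapMatrix ℝ).charpoly := by
    have hs (k : Fin ℓ) : ((closedSpider k).lapMatrix ℝ).charpoly.Splits :=
      ((closedSpider k).posSemidef_lapMatrix ℝ).isHermitian.splits_charpoly
    rw [(hs i).eq_prod_roots_of_monic (charpoly_monic _),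
      (hs j).eq_prod_roots_of_monic (charpoly_monic _), h]
  have hi := charpoly_closedSpider i
  have hj := charpoly_closedSpider j
  rw [hχ] at hi
  have hcross : (groundedPath (i + 1) + (2 : ℝ) • single 0 0 1).charpoly *
      (groundedPath (j + 1)).charpoly =
      (groundedPath (j + 1) + (2 : ℝ) • single 0 0 1).charpoly *
        (groundedPath (i + 1)).charpoly := by
    refine mul_left_cancel₀ (charpoly_monic (laplacian ℓ)).ne_zero ?_
    rw [← mul_assoc, ← mul_assoc, ← hi, ← hj]
    ring
  have hcoeff := congrArg (eval 0) hcross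
  simp only [eval_mul, eval_charpoly, map_zero, zero_sub, det_neg, det_groundedPath,
    det_groundedPath_add_single, Fintype.card_fin, mul_one] at hcoeff
  have hsign (n : ℕ) : ((-1 : ℝ) ^ n) ≠ 0 := by simp
  have hval : (2 * (i : ℕ) + 3 : ℝ) = 2 * (j : ℕ) + 3 := by
    refine mul_left_cancel₀ (mul_ne_zero (hsign (i + 1)) (hsign (j + 1))) ?_
    linear_combination hcoeff
  have : ((i : ℕ) : ℝ) = (j : ℕ) := by linarith
  exact Fin.ext (by exact_mod_cast this)

end SpiderVertex

theorem LEnergy_eq_of_iso {V W : Type*} [Fintype V] [DecidableEq V] [Fintype W] [DecidableEq W]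
    {G : SimpleGraph V} {H : SimpleGraph W} (f : G ≃g H) : LEnergy H = LEnergy G := by
  rw [LEnergy, LEnergy, f.charpoly_lapMatrix_eq, f.card_edgeFinset_eq,
    Fintype.card_congr f.toEquiv]

/-- For every integer `ℓ ≥ 2`, there exist `ℓ` pairwise Laplacian-noncospectral connected
unicyclic graphs on `n = 2ℓ² + 2ℓ + 2` vertices (a connected graph is unicyclic iff it has
as many edges as vertices), all having the same Laplacian energy. -/
theorem equienergetic_unicyclic_family (ℓ : ℕ) (hℓ : 2 ≤ ℓ) :
    ∃ G : Fin ℓ → SimpleGraph (Fin (2 * ℓ ^ 2 + 2 * ℓ + 2)),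
      (∀ i, (G i).Connected) ∧
      (∀ i, (G i).edgeFinset.card = 2 * ℓ ^ 2 + 2 * ℓ + 2) ∧
      (∀ i j, i ≠ j →
        ((G i).lapMatrix ℝ).charpoly.roots ≠ ((G j).lapMatrix ℝ).charpoly.roots) ∧
      (∀ i j, LEnergy (G i) = LEnergy (G j)) := by
  have hcard := SpiderVertex.card_eq ℓ
  let G (i : Fin ℓ) := (SpiderVertex.closedSpider i).overFin hcard
  let f (i : Fin ℓ) : SpiderVertex.closedSpider i ≃g G i :=
    (SpiderVertex.closedSpider i).overFinIso hcard
  refine ⟨G, fun i => ?_, fun i => ?_, fun i j hij h => hij ?_, fun i j => ?_⟩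
  · exact (f i).connected_iff.mp (SpiderVertex.connected_closedSpider i)
  · rw [← (f i).card_edgeFinset_eq, SpiderVertex.card_edgeFinset_closedSpider, hcard]
  · rw [(f i).charpoly_lapMatrix_eq, (f j).charpoly_lapMatrix_eq] at h
    exact SpiderVertex.closedSpider_eq_of_roots_eq h
  · have hE (k : Fin ℓ) : LEnergy (SpiderVertex.closedSpider k) =
        ((SpiderVertex.laplacian ℓ).charpoly.roots.map fun μ => |μ - 2|).sum := by
      have hne : (Fintype.card (SpiderVertex ℓ) : ℝ) ≠ 0 := by
        rw [hcard]; positivity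
      rw [LEnergy, SpiderVertex.card_edgeFinset_closedSpider, mul_div_assoc, div_self hne,
        mul_one]
      exact SpiderVertex.sum_abs_roots_closedSpider k
    rw [LEnergy_eq_of_iso (f i), LEnergy_eq_of_iso (f j), hE, hE]
end
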